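/- arXiv:1001.1783 — 9 statements merged into one kernel-verified Lean document; each statement's English description precedes it below -/
import Mathlib

section
/- Let p be a prime, let α ≥ 1, and let n ≥ 0 with standard base-p digits n_l n_{l−1} ⋯ n_0. Then the number of nonzero entries on row n of Pascal's triangle modulo p^α satisfies a_{p^α}(n) = (∏_{i=0}^{l} (n_i + 1)) · Σ_{γ=0}^{2(α−1)} Σ_{P ∈ S_α(γ)} Σ_{P: nonoverlapping subwords of n} c(v)c(w)⋯c(z), the equality read in the rational numbers. -/
/-- The number of integers `0 ≤ m ≤ n` such that `C(n,m)` is not divisible by `k`,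
i.e. the number of nonzero entries on row `n` of Pascal's triangle modulo `k`. -/
def rowCount (k n : ℕ) : ℕ :=
  ((Finset.range (n + 1)).filter fun m => ¬ k ∣ n.choose m).card

/-- The number of borrows when subtracting `m` from `n` in base `b` (for `m ≤ n`):
the number of indices `i ≥ 0` with `m mod b^(i+1) > n mod b^(i+1)`. -/
def borrowCount (b n m : ℕ) : ℕ :=
  ((Finset.range (Nat.digits b n).length).filter fun i => n % b ^ (i + 1) < m % b ^ (i + 1)).card

/-- `A_n(β)`: the number of `0 ≤ m ≤ n` with exactly `β` borrows
when subtracting `m` from `n` in base `b`. -/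
def borrowA (b n β : ℕ) : ℕ :=
  ((Finset.range (n + 1)).filter fun m => borrowCount b n m = β).card

/-- `B_n(β)` with respect to `L` digit positions: the number of `n < m ≤ b^L - 1` such that
exactly `β` of the indices `0 ≤ i ≤ L - 1` satisfy `m mod b^(i+1) > n mod b^(i+1)`. -/
def borrowB (b L n β : ℕ) : ℕ :=
  ((Finset.Ioc n (b ^ L - 1)).filter fun m =>
    ((Finset.range L).filter fun i => n % b ^ (i + 1) < m % b ^ (i + 1)).card = β).card

/-- The base-`b` digit string of `n`, most significant digit first (empty for `n = 0`). -/
def wordOf (b n : ℕ) : List ℕ := (Nat.digits b n).reverse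

/-- `|n|_w`: the number of occurrences of `w` as a contiguous subword of the
base-`b` digit string of `n`. -/
def subwordCount (b n : ℕ) (w : List ℕ) : ℕ :=
  ((Finset.range ((wordOf b n).length + 1 - w.length)).filter fun s =>
    ((wordOf b n).drop s).take w.length = w).card

/-- `c(w_k ⋯ w_0)` for a word `w = [w_k, …, w_0]` (most significant letter first):
`(w_k/(w_k+1)) · (∏_{h=1}^{k−1} (b−w_{k−h})/(w_{k−h}+1)) · (b−w_0−1)/(w_0+1)`. -/
def cword (b : ℕ) (w : List ℕ) : ℚ :=
  ((w.getD 0 0 : ℚ) / ((w.getD 0 0 : ℚ) + 1)) *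
    (∏ h ∈ Finset.Ico 1 (w.length - 1),
      ((b : ℚ) - (w.getD h 0 : ℚ)) / ((w.getD h 0 : ℚ) + 1)) *
    (((b : ℚ) - (w.getD (w.length - 1) 0 : ℚ) - 1) / ((w.getD (w.length - 1) 0 : ℚ) + 1))

/-- The sum `Σ c(v)c(w)⋯c(z)` over all sets of pairwise nonoverlapping contiguous subwords
of `W` (identified by their position intervals: a pair `(s, len)` denotes the subword
occupying positions `s, …, s+len-1`) whose multiset of lengths equals `P`. -/
def nonoverlapSum (b : ℕ) (W : List ℕ) (P : Multiset ℕ) : ℚ :=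
  ∑ S ∈ ((Finset.range W.length ×ˢ Finset.Icc 1 W.length).powerset.filter fun S =>
      Multiset.map Prod.snd S.val = P ∧
      (∀ q ∈ S, q.1 + q.2 ≤ W.length) ∧
      (∀ q ∈ S, ∀ r ∈ S, q ≠ r → q.1 + q.2 ≤ r.1 ∨ r.1 + r.2 ≤ q.1)),
    ∏ q ∈ S, cword b ((W.drop q.1).take q.2)

open Polynomial in
/-- Valid interval families. -/
def famS (L : ℕ) : Finset (Finset (ℕ × ℕ)) :=
  (Finset.range L ×ˢ Finset.Icc 1 L).powerset.filter fun S =>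
    (∀ q ∈ S, 2 ≤ q.2 ∧ q.1 + q.2 ≤ L) ∧
    (∀ q ∈ S, ∀ r ∈ S, q ≠ r → q.1 + q.2 ≤ r.1 ∨ r.1 + r.2 ≤ q.1)

lemma mem_famS {L : ℕ} {S : Finset (ℕ × ℕ)} : S ∈ famS L ↔
    (∀ q ∈ S, 2 ≤ q.2 ∧ q.1 + q.2 ≤ L) ∧
    (∀ q ∈ S, ∀ r ∈ S, q ≠ r → q.1 + q.2 ≤ r.1 ∨ r.1 + r.2 ≤ q.1) := by
  unfold famS
  simp only [Finset.mem_filter, Finset.mem_powerset, and_iff_right_iff_imp]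
  rintro ⟨h, -⟩ q hq
  have := h q hq
  simp only [Finset.mem_product, Finset.mem_range, Finset.mem_Icc]
  omega

lemma famS_sum_succ {R : Type*} [CommRing R] (f : ℕ × ℕ → R) (L : ℕ) :
    ∑ S ∈ famS (L + 1), ∏ q ∈ S, f q =
      ∑ S ∈ famS L, ∏ q ∈ S, f q +
        ∑ s ∈ Finset.range L, f (s, L + 1 - s) * ∑ S ∈ famS s, ∏ q ∈ S, f q := by
  classical
  rw [← Finset.sum_filter_add_sum_filter_not (famS (L + 1)) (fun S => ∀ q ∈ S, q.1 + q.2 ≤ L)]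
  congr 1
  · apply Finset.sum_congr _ (fun _ _ => rfl)
    ext S
    simp only [Finset.mem_filter, mem_famS]
    constructor
    · rintro ⟨⟨h1, h2⟩, h3⟩
      exact ⟨fun q hq => ⟨(h1 q hq).1, h3 q hq⟩, h2⟩
    · rintro ⟨h1, h2⟩
      exact ⟨⟨fun q hq => ⟨(h1 q hq).1, by have := (h1 q hq).2; omega⟩, h2⟩,
        fun q hq => (h1 q hq).2⟩
  · simp only [Finset.mul_sum]
    rw [Finset.sum_sigma']
    symm
    have key : ∀ (s : ℕ) (S : Finset (ℕ × ℕ)), S ∈ famS s → (s, L + 1 - s) ∉ S := by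
      intro s S hS hm
      have := (mem_famS.1 hS).1 _ hm
      simp only at this
      omega
    refine Finset.sum_bij (fun x _ => insert (x.1, L + 1 - x.1) x.2) ?_ ?_ ?_ ?_
    · rintro ⟨s, S⟩ hx
      simp only [Finset.mem_sigma, Finset.mem_range] at hx
      obtain ⟨hs, hS⟩ := hx
      have hS' := mem_famS.1 hS
      simp only [Finset.mem_filter, mem_famS]
      refine ⟨⟨?_, ?_⟩, ?_⟩
      · intro q hq
        rcases Finset.mem_insert.1 hq with rfl | hq
        · simp only; omega
        · have := hS'.1 q hq; omega
      · intro q hq r hr hne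
        rcases Finset.mem_insert.1 hq with rfl | hq <;> rcases Finset.mem_insert.1 hr with rfl | hr
        · exact absurd rfl hne
        · have := hS'.1 r hr; simp only; omega
        · have := hS'.1 q hq; simp only; omega
        · exact hS'.2 q hq r hr hne
      · push Not
        exact ⟨_, Finset.mem_insert_self _ _, by simp only; omega⟩
    · rintro ⟨s, S⟩ hx ⟨t, T⟩ hy h
      simp only [Finset.mem_sigma, Finset.mem_range] at hx hy h
      have hst : s = t := by
        have h1 : (s, L + 1 - s) ∈ insert (t, L + 1 - t) T := by
          rw [← h]; exact Finset.mem_insert_self _ _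
        rcases Finset.mem_insert.1 h1 with h1 | h1
        · exact (Prod.mk.inj h1).1
        · have := (mem_famS.1 hy.2).1 _ h1
          simp only at this; omega
      subst hst
      have : S = T := by
        rw [← Finset.erase_insert (key s S hx.2), h, Finset.erase_insert (key s T hy.2)]
      rw [this]
    · intro S hS
      simp only [Finset.mem_filter, mem_famS] at hS
      obtain ⟨⟨h1, h2⟩, h3⟩ := hS
      push Not at h3
      obtain ⟨⟨s, l⟩, hq, hl⟩ := h3
      have h1q := h1 _ hq
      simp only at hl h1q
      have hle : l = L + 1 - s := by omega
      subst hle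
      refine ⟨⟨s, S.erase (s, L + 1 - s)⟩, ?_, ?_⟩
      · simp only [Finset.mem_sigma, Finset.mem_range, mem_famS]
        refine ⟨by omega, ?_, ?_⟩
        · intro r hr
          have hr' := Finset.mem_of_mem_erase hr
          have := h2 _ hr' _ hq (Finset.ne_of_mem_erase hr)
          have := h1 r hr'
          simp only at *
          omega
        · intro q hq r hr
          exact h2 q (Finset.mem_of_mem_erase hq) r (Finset.mem_of_mem_erase hr)
      · exact Finset.insert_erase hq
    · rintro ⟨s, S⟩ hx
      simp only [Finset.mem_sigma, Finset.mem_range] at hx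
      rw [Finset.prod_insert (key s S hx.2)]

lemma sum_split {R : Type*} [CommRing R] (g : ℕ → R) (p n d : ℕ) (hd : d ≤ p) :
    ∑ M ∈ Finset.range (p * n + d), g M =
      ∑ m ∈ Finset.range (n + 1), ∑ e ∈ Finset.range d, g (p * m + e) +
      ∑ m ∈ Finset.range n, ∑ e ∈ Finset.Ico d p, g (p * m + e) := by
  have h0 : ∀ n, ∑ M ∈ Finset.range (p * n), g M =
      ∑ m ∈ Finset.range n, ∑ e ∈ Finset.range p, g (p * m + e) := by
    intro n
    induction n with
    | zero => simp
    | succ n ih =>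
      rw [Nat.mul_succ, Finset.sum_range_add, ih, Finset.sum_range_succ]
  rw [Finset.sum_range_add, h0, Finset.sum_range_succ, add_right_comm, ← Finset.sum_add_distrib]
  congr 1
  apply Finset.sum_congr rfl
  intro m _
  rw [Finset.sum_range_add_sum_Ico _ hd]

section
open Polynomial
/-- valuation of factorial -/
noncomputable def vf (p n : ℕ) : ℕ := padicValNat p n.factorial

noncomputable def polA (p n : ℕ) : ℚ[X] :=
  ∑ m ∈ Finset.range (n + 1), X ^ (vf p n - vf p m - vf p (n - m))

noncomputable def polB (p n : ℕ) : ℚ[X] :=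
  ∑ m ∈ Finset.range n, X ^ (vf p n - vf p m - vf p (n - 1 - m))

lemma vf_mul_add (p : ℕ) [Fact p.Prime] (n d : ℕ) (hd : d < p) :
    vf p (p * n + d) = n + vf p n := by
  unfold vf
  rw [padicValNat_factorial_mul_add n hd, padicValNat_factorial_mul, add_comm]

lemma vf_super (p : ℕ) [Fact p.Prime] (a b n : ℕ) (h : a + b ≤ n) :
    vf p a + vf p b ≤ vf p n := by
  unfold vf
  rw [← padicValNat.mul (Nat.factorial_ne_zero _) (Nat.factorial_ne_zero _)]
  refine (padicValNat_dvd_iff_le (Nat.factorial_ne_zero _)).1 (pow_padicValNat_dvd.trans ?_)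
  exact (Nat.factorial_mul_factorial_dvd_factorial_add a b).trans (Nat.factorial_dvd_factorial h)

lemma polA_rec (p : ℕ) [Fact p.Prime] (n d : ℕ) (hd : d < p) :
    polA p (p * n + d) = ((d : ℚ[X]) + 1) * polA p n + ((p : ℚ[X]) - (d : ℚ[X]) - 1) * X * polB p n := by
  rw [polA, add_assoc, sum_split _ p n (d + 1) hd]
  congr 1
  · rw [polA, Finset.mul_sum]
    apply Finset.sum_congr rfl
    intro m hm
    rw [Finset.mem_range] at hm
    have : ∀ e ∈ Finset.range (d + 1), (X : ℚ[X]) ^ (vf p (p * n + d) - vf p (p * m + e) -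
        vf p (p * n + d - (p * m + e))) = X ^ (vf p n - vf p m - vf p (n - m)) := by
      intro e he
      rw [Finset.mem_range] at he
      have h1 : p * n + d - (p * m + e) = p * (n - m) + (d - e) := by
        have : p * m ≤ p * n := Nat.mul_le_mul_left _ (by omega)
        rw [Nat.mul_sub]; omega
      rw [h1, vf_mul_add p _ _ hd, vf_mul_add p _ _ (by omega), vf_mul_add p _ _ (by omega)]
      congr 1
      omega
    rw [Finset.sum_congr rfl this]
    simp
  · rw [polB, Finset.mul_sum]
    apply Finset.sum_congr rfl
    intro m hm
    rw [Finset.mem_range] at hm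
    have : ∀ e ∈ Finset.Ico (d + 1) p, (X : ℚ[X]) ^ (vf p (p * n + d) - vf p (p * m + e) -
        vf p (p * n + d - (p * m + e))) = X * X ^ (vf p n - vf p m - vf p (n - 1 - m)) := by
      intro e he
      rw [Finset.mem_Ico] at he
      have h1 : p * n + d - (p * m + e) = p * (n - 1 - m) + (p + d - e) := by
        obtain ⟨k, rfl⟩ : ∃ k, n = m + 1 + k := ⟨n - m - 1, by omega⟩
        rw [show m + 1 + k - 1 - m = k by omega, mul_add, mul_add]; omega
      rw [h1, vf_mul_add p _ _ hd, vf_mul_add p _ _ (by omega), vf_mul_add p _ _ (by omega),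
        ← pow_succ']
      have := vf_super p m (n - 1 - m) n (by omega)
      congr 1
      omega
    rw [Finset.sum_congr rfl this, Finset.sum_const, Nat.card_Ico, nsmul_eq_mul, Nat.cast_sub hd]
    push_cast
    ring

lemma polB_rec (p : ℕ) [Fact p.Prime] (n d : ℕ) (hd : d < p) :
    polB p (p * n + d) = (d : ℚ[X]) * polA p n + ((p : ℚ[X]) - (d : ℚ[X])) * X * polB p n := by
  rw [polB, sum_split _ p n d hd.le]
  congr 1
  · rw [polA, Finset.mul_sum]
    apply Finset.sum_congr rfl
    intro m hm
    rw [Finset.mem_range] at hm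
    have : ∀ e ∈ Finset.range d, (X : ℚ[X]) ^ (vf p (p * n + d) - vf p (p * m + e) -
        vf p (p * n + d - 1 - (p * m + e))) = X ^ (vf p n - vf p m - vf p (n - m)) := by
      intro e he
      rw [Finset.mem_range] at he
      have h1 : p * n + d - 1 - (p * m + e) = p * (n - m) + (d - 1 - e) := by
        have : p * m ≤ p * n := Nat.mul_le_mul_left _ (by omega)
        rw [Nat.mul_sub]; omega
      rw [h1, vf_mul_add p _ _ hd, vf_mul_add p _ _ (by omega), vf_mul_add p _ _ (by omega)]
      congr 1
      omega
    rw [Finset.sum_congr rfl this]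
    simp
  · rw [polB, Finset.mul_sum]
    apply Finset.sum_congr rfl
    intro m hm
    rw [Finset.mem_range] at hm
    have : ∀ e ∈ Finset.Ico d p, (X : ℚ[X]) ^ (vf p (p * n + d) - vf p (p * m + e) -
        vf p (p * n + d - 1 - (p * m + e))) = X * X ^ (vf p n - vf p m - vf p (n - 1 - m)) := by
      intro e he
      rw [Finset.mem_Ico] at he
      have h1 : p * n + d - 1 - (p * m + e) = p * (n - 1 - m) + (p + d - 1 - e) := by
        obtain ⟨k, rfl⟩ : ∃ k, n = m + 1 + k := ⟨n - m - 1, by omega⟩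
        rw [show m + 1 + k - 1 - m = k by omega, mul_add, mul_add]; omega
      rw [h1, vf_mul_add p _ _ hd, vf_mul_add p _ _ (by omega), vf_mul_add p _ _ (by omega),
        ← pow_succ']
      have := vf_super p m (n - 1 - m) n (by omega)
      congr 1
      omega
    rw [Finset.sum_congr rfl this, Finset.sum_const, Nat.card_Ico, nsmul_eq_mul,
      Nat.cast_sub hd.le]
    ring
end

section
open Polynomial

/-- weight of an interval -/
noncomputable def wt (p : ℕ) (W : List ℕ) (q : ℕ × ℕ) : ℚ[X] :=
  C (cword p ((W.drop q.1).take q.2)) * X ^ (q.2 - 1)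

noncomputable def polT (p : ℕ) (W : List ℕ) (L : ℕ) : ℚ[X] :=
  ∑ S ∈ famS L, ∏ q ∈ S, wt p W q

noncomputable def polG (p : ℕ) (W : List ℕ) (L : ℕ) : ℚ[X] :=
  C (∏ i ∈ Finset.range L, ((W.getD i 0 : ℚ) + 1)) * polT p W L

noncomputable def polH (p : ℕ) (W : List ℕ) (L : ℕ) : ℚ[X] :=
  ∑ s ∈ Finset.range L, C ((W.getD s 0 : ℚ) * ∏ h ∈ Finset.Ico (s + 1) L,
    ((p : ℚ) - (W.getD h 0 : ℚ))) * X ^ (L - 1 - s) * polG p W s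

lemma polH_succ (p : ℕ) (W : List ℕ) (L : ℕ) :
    polH p W (L + 1) = C (W.getD L 0 : ℚ) * polG p W L +
      C ((p : ℚ) - (W.getD L 0 : ℚ)) * X * polH p W L := by
  rw [polH, Finset.sum_range_succ, add_comm]
  congr 1
  · simp
  · rw [polH, Finset.mul_sum]
    apply Finset.sum_congr rfl
    intro s hs
    rw [Finset.mem_range] at hs
    rw [Finset.prod_Ico_succ_top (by omega), show L + 1 - 1 - s = (L - 1 - s) + 1 by omega, pow_succ]
    simp only [C_mul]
    ring

lemma cword_eq (p : ℕ) (W : List ℕ) (L s : ℕ) (hs : s < L) (hL : L + 1 ≤ W.length) :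
    (∏ i ∈ Finset.range (L + 1), ((W.getD i 0 : ℚ) + 1)) *
      cword p ((W.drop s).take (L + 1 - s)) =
    ((p : ℚ) - (W.getD L 0 : ℚ) - 1) * ((W.getD s 0 : ℚ) * ∏ h ∈ Finset.Ico (s + 1) L,
      ((p : ℚ) - (W.getD h 0 : ℚ))) * ∏ i ∈ Finset.range s, ((W.getD i 0 : ℚ) + 1) := by
  have hlen : ((W.drop s).take (L + 1 - s)).length = L + 1 - s := by
    simp only [List.length_take, List.length_drop]; omega
  have hget : ∀ h < L + 1 - s, ((W.drop s).take (L + 1 - s)).getD h 0 = W.getD (s + h) 0 := by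
    intro h hh
    rw [List.getD_eq_getElem?_getD, List.getD_eq_getElem?_getD, List.getElem?_take_of_lt hh,
      List.getElem?_drop]
  have hpos : ∀ i, ((W.getD i 0 : ℚ) + 1) ≠ 0 := fun i => by positivity
  rw [cword, hlen, hget 0 (by omega), hget (L + 1 - s - 1) (by omega),
    show s + (L + 1 - s - 1) = L by omega, add_zero]
  have h1 : ∏ h ∈ Finset.Ico 1 (L + 1 - s - 1),
      ((p : ℚ) - (((W.drop s).take (L + 1 - s)).getD h 0 : ℚ)) /
        ((((W.drop s).take (L + 1 - s)).getD h 0 : ℚ) + 1) =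
      (∏ h ∈ Finset.Ico (s + 1) L, ((p : ℚ) - (W.getD h 0 : ℚ))) /
        ∏ h ∈ Finset.Ico (s + 1) L, ((W.getD h 0 : ℚ) + 1) := by
    rw [← Finset.prod_div_distrib]
    have := Finset.prod_Ico_add (fun h => ((p : ℚ) - (W.getD h 0 : ℚ)) / ((W.getD h 0 : ℚ) + 1))
      1 (L - s) s
    rw [show 1 + s = s + 1 by omega, show L - s + s = L by omega] at this
    rw [← this, show L + 1 - s - 1 = L - s by omega]
    apply Finset.prod_congr rfl
    intro h hh
    rw [Finset.mem_Ico] at hh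
    rw [hget h (by omega)]
  have h2 : ∏ i ∈ Finset.range (L + 1), ((W.getD i 0 : ℚ) + 1) =
      (∏ i ∈ Finset.range s, ((W.getD i 0 : ℚ) + 1)) * ((W.getD s 0 : ℚ) + 1) *
      (∏ h ∈ Finset.Ico (s + 1) L, ((W.getD h 0 : ℚ) + 1)) * ((W.getD L 0 : ℚ) + 1) := by
    rw [Finset.prod_range_succ,
      ← Finset.prod_range_succ (fun i => ((W.getD i 0 : ℚ) + 1)) s,
      Finset.prod_range_mul_prod_Ico (fun i => ((W.getD i 0 : ℚ) + 1)) hs]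
  rw [h1, h2]
  have h3 : ∏ h ∈ Finset.Ico (s + 1) L, ((W.getD h 0 : ℚ) + 1) ≠ 0 :=
    Finset.prod_ne_zero_iff.2 fun i _ => hpos i
  have h4 := hpos s
  have h5 := hpos L
  field_simp

lemma polG_succ (p : ℕ) (W : List ℕ) (L : ℕ) (hL : L + 1 ≤ W.length) :
    polG p W (L + 1) = C ((W.getD L 0 : ℚ) + 1) * polG p W L +
      C ((p : ℚ) - (W.getD L 0 : ℚ) - 1) * X * polH p W L := by
  rw [polG, polT, famS_sum_succ, mul_add]
  refine congrArg₂ (· + ·) ?_ ?_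
  · rw [Finset.prod_range_succ, polG, polT, C_mul]
    ring
  · rw [polH, Finset.mul_sum, Finset.mul_sum]
    apply Finset.sum_congr rfl
    intro s hs
    rw [Finset.mem_range] at hs
    have := congrArg (C : ℚ → ℚ[X]) (cword_eq p W L s hs hL)
    rw [C_mul, C_mul, C_mul] at this
    rw [wt, polG, polT]
    simp only
    rw [← mul_assoc, ← mul_assoc, this, show L + 1 - s - 1 = (L - 1 - s) + 1 by omega, pow_succ]
    ring

lemma word_getD (p n L : ℕ) (hp : 2 ≤ p) (hL : L < (Nat.digits p n).length) :
    (wordOf p n).getD L 0 = n / p ^ ((Nat.digits p n).length - 1 - L) % p := by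
  rw [← Nat.getD_digits _ _ hp, wordOf, List.getD_eq_getElem?_getD, List.getD_eq_getElem?_getD,
    List.getElem?_reverse hL]

lemma main_poly (p : ℕ) [hp : Fact p.Prime] (n L : ℕ) (hL : L ≤ (Nat.digits p n).length) :
    polA p (n / p ^ ((Nat.digits p n).length - L)) = polG p (wordOf p n) L ∧
    polB p (n / p ^ ((Nat.digits p n).length - L)) = polH p (wordOf p n) L := by
  induction L with
  | zero =>
    have h0 : n / p ^ ((Nat.digits p n).length - 0) = 0 :=
      Nat.div_eq_of_lt (Nat.lt_base_pow_length_digits hp.out.one_lt)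
    have hf : famS 0 = {∅} := by
      ext S
      simp only [mem_famS, Finset.mem_singleton]
      constructor
      · rintro ⟨h, -⟩
        rw [Finset.eq_empty_iff_forall_notMem]
        intro q hq
        have := h q hq
        omega
      · rintro rfl; simp
    rw [h0]
    simp [polA, polB, polG, polH, polT, hf]
  | succ L ih =>
    obtain ⟨ihA, ihB⟩ := ih (by omega)
    set N := (Nat.digits p n).length with hN
    have hw := word_getD p n L hp.out.two_le (by omega)
    rw [← hN] at hw
    have hdlt : (wordOf p n).getD L 0 < p := by rw [hw]; exact Nat.mod_lt _ hp.out.pos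
    have hrec : n / p ^ (N - (L + 1)) = p * (n / p ^ (N - L)) + (wordOf p n).getD L 0 := by
      rw [hw, show N - L = (N - 1 - L) + 1 by omega, pow_succ, ← Nat.div_div_eq_div_mul,
        show N - (L + 1) = N - 1 - L by omega, Nat.div_add_mod]
    rw [hrec, polA_rec p _ _ hdlt, polB_rec p _ _ hdlt, ihA, ihB, polH_succ,
      polG_succ _ _ _ (by simp only [wordOf, List.length_reverse]; omega)]
    simp

/-- sum of low coefficients -/
noncomputable def lowc (α : ℕ) : ℚ[X] →ₗ[ℚ] ℚ := ∑ k ∈ Finset.range α, lcoeff ℚ k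

lemma lowc_mono (α k : ℕ) (c : ℚ) : lowc α (C c * X ^ k) = if k < α then c else 0 := by
  simp [lowc, coeff_X_pow, LinearMap.sum_apply]

lemma lowc_polA (p : ℕ) [hp : Fact p.Prime] (α n : ℕ) :
    lowc α (polA p n) = (rowCount (p ^ α) n : ℚ) := by
  rw [polA, map_sum, rowCount, Finset.card_filter, Nat.cast_sum]
  apply Finset.sum_congr rfl
  intro m hm
  rw [Finset.mem_range] at hm
  have h1 : vf p n - vf p m - vf p (n - m) = padicValNat p (n.choose m) := by
    have h := Nat.choose_mul_factorial_mul_factorial (show m ≤ n by omega)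
    have h2 := congrArg (padicValNat p) h
    rw [padicValNat.mul (mul_ne_zero (Nat.choose_ne_zero (by omega)) (Nat.factorial_ne_zero _))
      (Nat.factorial_ne_zero _), padicValNat.mul (Nat.choose_ne_zero (by omega))
      (Nat.factorial_ne_zero _)] at h2
    unfold vf
    omega
  have h3 := lowc_mono α (vf p n - vf p m - vf p (n - m)) 1
  rw [C_1, one_mul] at h3
  have h4 := padicValNat_dvd_iff_le (p := p) (n := α)
    (Nat.choose_ne_zero (show m ≤ n by omega))
  rw [h3, h1]
  simp only [h4, not_le, Nat.cast_ite, Nat.cast_one, Nat.cast_zero]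

lemma lowc_polT (p : ℕ) (α : ℕ) (W : List ℕ) :
    lowc α (polT p W W.length) = ∑ S ∈ (famS W.length).filter
      (fun S => ∑ q ∈ S, (q.2 - 1) < α), ∏ q ∈ S, cword p ((W.drop q.1).take q.2) := by
  rw [polT, map_sum, Finset.sum_filter]
  apply Finset.sum_congr rfl
  intro S _
  simp only [wt, Finset.prod_mul_distrib, Finset.prod_pow_eq_pow_sum, ← map_prod]
  exact lowc_mono _ _ _
end

lemma rhs_eq (p α : ℕ) (hα : 1 ≤ α) (W : List ℕ) :
    ∑ γ ∈ Finset.range (2 * (α - 1) + 1),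
          ∑ P ∈ Finset.univ.filter (fun P : Nat.Partition γ =>
              γ - (α - 1) ≤ Multiset.card P.parts ∧ ∀ x ∈ P.parts, 2 ≤ x),
            nonoverlapSum p W P.parts =
    ∑ S ∈ (famS W.length).filter
      (fun S => ∑ q ∈ S, (q.2 - 1) < α), ∏ q ∈ S, cword p ((W.drop q.1).take q.2) := by
  have hsum : ∀ S : Finset (ℕ × ℕ), (∀ q ∈ S, 2 ≤ q.2) →
      ∑ q ∈ S, (q.2 - 1) + S.card = (Multiset.map Prod.snd S.val).sum ∧
      2 * S.card ≤ (Multiset.map Prod.snd S.val).sum := by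
    intro S hS
    change _ = ∑ q ∈ S, q.2 ∧ _ ≤ ∑ q ∈ S, q.2
    constructor
    · rw [Finset.card_eq_sum_ones, ← Finset.sum_add_distrib]
      apply Finset.sum_congr rfl
      intro q hq
      have := hS q hq
      omega
    · rw [mul_comm, ← smul_eq_mul]
      exact Finset.card_nsmul_le_sum _ _ _ hS
  simp only [nonoverlapSum]
  rw [Finset.sum_sigma', Finset.sum_sigma']
  refine Finset.sum_bij (fun x _ => x.2) ?_ ?_ ?_ ?_
  · rintro ⟨⟨γ, P⟩, S⟩ hx
    simp only [Finset.mem_sigma, Finset.mem_filter, Finset.mem_univ, true_and,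
      Finset.mem_range] at hx
    obtain ⟨⟨hγ, hc, h2⟩, -, hP, hb, hd⟩ := hx
    simp only [Finset.mem_filter, mem_famS]
    have h2' : ∀ q ∈ S, 2 ≤ q.2 := fun q hq => h2 _ (by
      rw [← hP]; exact Multiset.mem_map_of_mem _ hq)
    have := hsum S h2'
    have hs := P.parts_sum
    have hcard : Multiset.card P.parts = S.card := by rw [← hP, Multiset.card_map]; rfl
    rw [hP, hs] at this
    exact ⟨⟨fun q hq => ⟨h2' q hq, hb q hq⟩, hd⟩, by omega⟩
  · rintro ⟨⟨γ, P⟩, S⟩ hx ⟨⟨γ', P'⟩, S'⟩ hx' h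
    simp only [Finset.mem_sigma, Finset.mem_filter, Finset.mem_univ, true_and,
      Finset.mem_range] at hx hx' h
    subst h
    have hPP : P.parts = P'.parts := hx.2.2.1.symm.trans hx'.2.2.1
    have : γ = γ' := by rw [← P.parts_sum, ← P'.parts_sum, hPP]
    subst this
    have : P = P' := Nat.Partition.ext hPP
    rw [this]
  · intro S hS
    simp only [Finset.mem_filter, mem_famS] at hS
    obtain ⟨⟨h1, hd⟩, hlt⟩ := hS
    have := hsum S (fun q hq => (h1 q hq).1)
    refine ⟨⟨⟨(Multiset.map Prod.snd S.val).sum, ⟨Multiset.map Prod.snd S.val, ?_, rfl⟩⟩, S⟩, ?_, rfl⟩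
    · intro i hi
      obtain ⟨q, hq, rfl⟩ := Multiset.mem_map.1 hi
      have := h1 q hq
      omega
    · simp only [Finset.mem_sigma, Finset.mem_filter, Finset.mem_univ, true_and,
        Finset.mem_range, Finset.mem_powerset, Multiset.card_map]
      refine ⟨⟨by omega, ?_, ?_⟩, ?_, fun q hq => (h1 q hq).2, hd⟩
      · change _ ≤ S.card
        omega
      · intro i hi
        obtain ⟨q, hq, rfl⟩ := Multiset.mem_map.1 hi
        exact (h1 q hq).1
      · intro q hq
        have := h1 q hq
        simp only [Finset.mem_product, Finset.mem_range, Finset.mem_Icc]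
        omega
  · intros; rfl

/-- **Theorem 1 (main theorem).** For a prime `p`, `α ≥ 1` and `n ≥ 0` with base-`p` digits
`n_l ⋯ n_0`, the number of nonzero entries on row `n` of Pascal's triangle modulo `p^α` is
`a_{p^α}(n) = (∏ (n_i+1)) · Σ_{γ=0}^{2(α−1)} Σ_{P ∈ S_α(γ)} Σ_{nonoverlapping subwords} c(v)⋯c(z)`,
where `S_α(γ)` is the set of partitions of `γ` into at least `max(0, γ−(α−1))` parts,
all parts at least 2. -/
theorem stmt0 (p : ℕ) (hp : p.Prime) (α : ℕ) (hα : 1 ≤ α) (n : ℕ) :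
    (rowCount (p ^ α) n : ℚ) =
      (∏ i ∈ Finset.range (Nat.digits p n).length,
          (((Nat.digits p n).getD i 0 : ℚ) + 1)) *
        ∑ γ ∈ Finset.range (2 * (α - 1) + 1),
          ∑ P ∈ Finset.univ.filter (fun P : Nat.Partition γ =>
              γ - (α - 1) ≤ Multiset.card P.parts ∧ ∀ x ∈ P.parts, 2 ≤ x),
            nonoverlapSum p (wordOf p n) P.parts := by
  have : Fact p.Prime := ⟨hp⟩
  have hlen : (wordOf p n).length = (Nat.digits p n).length := by simp [wordOf]
  have h := (main_poly p n _ le_rfl).1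
  rw [Nat.sub_self, pow_zero, Nat.div_one] at h
  rw [← lowc_polA, h, polG, ← Polynomial.smul_eq_C_mul, map_smul, ← hlen, lowc_polT, rhs_eq p α hα,
    smul_eq_mul]
  congr 1
  rw [← Finset.prod_range_reflect, hlen]
  apply Finset.prod_congr rfl
  intro i hi
  rw [Finset.mem_range] at hi
  rw [word_getD p n _ hp.two_le (by omega), Nat.getD_digits _ _ hp.two_le,
    show (Nat.digits p n).length - 1 - ((Nat.digits p n).length - 1 - i) = i by omega]
end

section
/- Let p be a prime and let n ≥ 0 with standard base-p digits n_l n_{l−1} ⋯ n_0. Then the number of nonzero entries on row n of Pascal's triangle modulo p^2 satisfies a_{p^2}(n) = (∏_{i=0}^{l} (n_i + 1)) · (1 + Σ_{i=0}^{l−1} (n_{i+1}/(n_{i+1}+1)) · ((p − n_i − 1)/(n_i + 1))), the equality read in the rational numbers. -/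
section aux
open Finset

theorem aux_block (p N : ℕ) (f : ℕ → ℕ) :
    ∑ m ∈ range (p * N), f m = ∑ m ∈ range N, ∑ e ∈ range p, f (p * m + e) := by
  induction N with
  | zero => simp
  | succ N ih => rw [Nat.mul_succ, sum_range_add, ih, sum_range_succ]

theorem aux_thr (p N t : ℕ) (ht : t ≤ p) (f g h : ℕ → ℕ)
    (hg : ∀ m e, e < t → f (p * m + e) = g m)
    (hh : ∀ m e, t ≤ e → e < p → f (p * m + e) = h m) :
    ∑ m ∈ range (p * N), f m
      = t * ∑ m ∈ range N, g m + (p - t) * ∑ m ∈ range N, h m := by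
  rw [aux_block, mul_sum, mul_sum, ← sum_add_distrib]
  refine sum_congr rfl fun m _ => ?_
  obtain ⟨q, rfl⟩ := Nat.exists_eq_add_of_le ht
  rw [sum_range_add]
  congr 1
  · rw [sum_congr rfl fun e he => hg m e (mem_range.1 he)]; simp
  · rw [sum_congr rfl fun e he => hh m (t + e) (by omega) (by have := mem_range.1 he; omega)]
    simp

theorem aux_vfac (p : ℕ) [Fact p.Prime] (n d : ℕ) (hd : d < p) :
    padicValNat p (p * n + d).factorial = n + padicValNat p n.factorial := by
  rw [padicValNat_factorial_mul_add _ hd, padicValNat_factorial_mul]; omega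

theorem aux_vch (p : ℕ) [Fact p.Prime] (n m : ℕ) (h : m ≤ n) :
    padicValNat p (n.choose m) + padicValNat p m.factorial + padicValNat p (n - m).factorial
      = padicValNat p n.factorial := by
  have h0 := (Nat.choose_pos h).ne'
  rw [← Nat.choose_mul_factorial_mul_factorial h, padicValNat.mul (by positivity) (by positivity),
    padicValNat.mul (by positivity) (by positivity)]

theorem aux_lt {p n m d e : ℕ} (hd : d < p) (h : n < m) : p * n + d < p * m + e := by
  have : p * (n + 1) ≤ p * m := Nat.mul_le_mul_left p h
  rw [mul_add] at this; omega

theorem aux_le (p : ℕ) [Fact p.Prime] (n m d e k : ℕ) (hd : d < p) (he : e ≤ d) :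
    p ^ k ∣ (p * n + d).choose (p * m + e) ↔ p ^ k ∣ n.choose m := by
  rcases lt_or_ge n m with h | h
  · rw [Nat.choose_eq_zero_of_lt h, Nat.choose_eq_zero_of_lt (aux_lt hd h)]
  · obtain ⟨c, rfl⟩ := Nat.exists_eq_add_of_le h
    have hle : p * m + e ≤ p * (m + c) + d := by rw [mul_add]; omega
    have hs : p * (m + c) + d - (p * m + e) = p * c + (d - e) := by rw [mul_add]; omega
    have h1 := aux_vch p _ _ hle
    have h2 := aux_vch p _ _ h
    rw [hs, aux_vfac p _ _ hd, aux_vfac p _ _ (by omega), aux_vfac p _ _ (by omega)] at h1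
    rw [Nat.add_sub_cancel_left] at h2
    rw [padicValNat_dvd_iff_le (Nat.choose_pos hle).ne', padicValNat_dvd_iff_le (Nat.choose_pos h).ne']
    omega

theorem aux_gt (p : ℕ) [Fact p.Prime] (n m d e k : ℕ) (he : d < e) (hep : e < p) :
    p ^ (k + 1) ∣ (p * n + d).choose (p * m + e) ↔ p ^ k ∣ (n - m) * n.choose m := by
  rcases le_or_gt n m with h | h
  · rw [Nat.sub_eq_zero_of_le h, Nat.choose_eq_zero_of_lt]
    · simp
    · have : p * n ≤ p * m := Nat.mul_le_mul_left p h
      omega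
  · obtain ⟨c, rfl⟩ := Nat.exists_eq_add_of_lt h
    have hle : p * m + e ≤ p * (m + c + 1) + d := by rw [mul_add, mul_add]; omega
    have hs : p * (m + c + 1) + d - (p * m + e) = p * c + (p + d - e) := by
      rw [mul_add, mul_add]; omega
    have h1 := aux_vch p _ _ hle
    have h2 := aux_vch p _ _ h.le
    rw [hs, aux_vfac p _ _ (by omega), aux_vfac p _ _ (by omega), aux_vfac p _ _ (by omega)] at h1
    have hc : m + c + 1 - m = c + 1 := by omega
    rw [hc, Nat.factorial_succ, padicValNat.mul (by omega) (by positivity)] at h2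
    have h0 := (Nat.choose_pos h.le).ne'
    rw [hc, padicValNat_dvd_iff_le (Nat.choose_pos hle).ne',
      padicValNat_dvd_iff_le (by positivity), padicValNat.mul (by omega) h0]
    omega

theorem aux_row (k n N : ℕ) (h : n < N) :
    rowCount k n = ∑ m ∈ range N, if k ∣ n.choose m then 0 else 1 := by
  obtain ⟨c, rfl⟩ := Nat.exists_eq_add_of_le (Nat.succ_le_of_lt h)
  rw [sum_range_add]
  have : ∑ x ∈ range c, (if k ∣ n.choose (n.succ + x) then 0 else 1) = 0 := by
    refine sum_eq_zero fun x _ => ?_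
    rw [Nat.choose_eq_zero_of_lt (by omega)]; simp
  rw [this, rowCount, card_filter]
  simp [ite_not]

/-- auxiliary count -/
def auxT (p n : ℕ) : ℕ := ∑ m ∈ range (n + 1), if p ∣ (n - m) * n.choose m then 0 else 1

theorem aux_recR (p : ℕ) [Fact p.Prime] (n d : ℕ) (hd : d < p) :
    rowCount (p ^ 2) (p * n + d) = (d + 1) * rowCount (p ^ 2) n + (p - (d + 1)) * auxT p n := by
  rw [aux_row _ _ (p * (n + 1)) (by rw [mul_add]; omega), aux_row _ _ (n + 1) (by omega), auxT]
  apply aux_thr p (n + 1) (d + 1) hd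
  · intro m e he
    simp only [aux_le p n m d e 2 hd (by omega)]
  · intro m e he hep
    simp only [aux_gt p n m d e 1 (by omega) hep, pow_one]

theorem aux_recA (p : ℕ) [Fact p.Prime] (n d : ℕ) (hd : d < p) :
    rowCount p (p * n + d) = (d + 1) * rowCount p n := by
  rw [aux_row _ _ (p * (n + 1)) (by rw [mul_add]; omega), aux_row _ _ (n + 1) (by omega)]
  rw [aux_thr p (n + 1) (d + 1) hd _ (fun m => if p ∣ n.choose m then 0 else 1) (fun _ => 0)]
  · simp
  · intro m e he
    have := aux_le p n m d e 1 hd (by omega)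
    rw [pow_one] at this
    simp only [this]
  · intro m e he hep
    have := aux_gt p n m d e 0 (by omega) hep
    simp at this
    simp [this]

theorem aux_recT (p : ℕ) [hp : Fact p.Prime] (n d : ℕ) (hd : d < p) :
    auxT p (p * n + d) = d * rowCount p n := by
  have h1 : auxT p (p * n + d) = ∑ m ∈ range (p * (n + 1)),
      if p ∣ (p * n + d - m) * (p * n + d).choose m then 0 else 1 := by
    rw [auxT]
    apply sum_subset
    · intro x; simp only [mem_range, mul_add]; omega
    · intro x _ hx
      simp only [mem_range] at hx
      rw [Nat.choose_eq_zero_of_lt (by omega)]; simp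
  rw [h1, aux_row _ _ (n + 1) (by omega)]
  rw [aux_thr p (n + 1) d hd.le _ (fun m => if p ∣ n.choose m then 0 else 1) (fun _ => 0)]
  · simp
  · intro m e he
    have := aux_le p n m d e 1 hd (by omega)
    rw [pow_one] at this
    simp only [hp.out.dvd_mul, this]
    rcases lt_or_ge n m with h | h
    · rw [Nat.choose_eq_zero_of_lt h]; simp
    · obtain ⟨c, rfl⟩ := Nat.exists_eq_add_of_le h
      have hs : p * (m + c) + d - (p * m + e) = p * c + (d - e) := by rw [mul_add]; omega
      have hn : ¬ p ∣ p * c + (d - e) := by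
        rw [Nat.dvd_add_right (dvd_mul_right p c)]
        exact Nat.not_dvd_of_pos_of_lt (by omega) (by omega)
      rw [hs]; simp only [hn, false_or]
  · intro m e he hep
    rcases he.eq_or_lt with rfl | he
    · rw [Nat.add_sub_add_right, ← Nat.mul_sub, if_pos]
      exact Dvd.dvd.mul_right (dvd_mul_right _ _) _
    · have := aux_gt p n m d e 0 (by omega) hep
      simp at this
      rw [if_pos (this.mul_left _)]

/-- digit product -/
def auxP (L : List ℕ) : ℚ := ∏ i ∈ range L.length, ((L.getD i 0 : ℚ) + 1)

/-- right-hand side -/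
def auxF (p : ℕ) (L : List ℕ) : ℚ :=
  auxP L * (1 + ∑ i ∈ range (L.length - 1),
    ((L.getD (i + 1) 0 : ℚ) / ((L.getD (i + 1) 0 : ℚ) + 1)) *
            (((p : ℚ) - (L.getD i 0 : ℚ) - 1) / ((L.getD i 0 : ℚ) + 1)))

theorem auxP_cons (d : ℕ) (L : List ℕ) : auxP (d :: L) = (d + 1) * auxP L := by
  simp only [auxP, List.length_cons, prod_range_succ', List.getD_cons_succ, List.getD_cons_zero]
  ring

theorem auxF_cons (p d d' : ℕ) (L : List ℕ) :
    auxF p (d :: d' :: L) = (d + 1) * auxF p (d' :: L) + (p - (d + 1)) * (d' * auxP L) := by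
  have h1 : (d : ℚ) + 1 ≠ 0 := by positivity
  have h2 : (d' : ℚ) + 1 ≠ 0 := by positivity
  simp only [auxF, auxP_cons, List.length_cons, Nat.add_sub_cancel, sum_range_succ' _ (L.length),
    List.getD_cons_succ, List.getD_cons_zero]
  field_simp
  ring

theorem aux_A (p : ℕ) [hp : Fact p.Prime] (n : ℕ) :
    (rowCount p n : ℚ) = auxP (Nat.digits p n) := by
  induction n using Nat.strong_induction_on with
  | _ n ih =>
    rcases Nat.eq_zero_or_pos n with rfl | hn
    · simp [auxP, rowCount, filter_singleton, hp.out.one_lt.ne']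
    · have h := aux_recA p (n / p) (n % p) (Nat.mod_lt _ hp.out.pos)
      rw [Nat.div_add_mod] at h
      rw [h, Nat.digits_def' hp.out.one_lt hn, auxP_cons,
        ← ih _ (Nat.div_lt_self hn hp.out.one_lt)]
      push_cast; ring

theorem aux_F (p : ℕ) [hp : Fact p.Prime] (n : ℕ) :
    (rowCount (p ^ 2) n : ℚ) = auxF p (Nat.digits p n) := by
  have r0 : rowCount (p ^ 2) 0 = 1 := by
    simp [rowCount, filter_singleton, hp.out.one_lt.ne']
  induction n using Nat.strong_induction_on with
  | _ n ih =>
    rcases Nat.eq_zero_or_pos n with rfl | hn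
    · simp [auxF, auxP, r0]
    · have hd := Nat.mod_lt n hp.out.pos
      have h := aux_recR p (n / p) (n % p) hd
      have ih' := ih _ (Nat.div_lt_self hn hp.out.one_lt)
      rw [Nat.div_add_mod] at h
      rw [h, Nat.digits_def' hp.out.one_lt hn]
      rcases Nat.eq_zero_or_pos (n / p) with h0 | h0
      · rw [h0, r0]
        simp [auxF, auxP, auxT]
      · have hT := aux_recT p (n / p / p) (n / p % p) (Nat.mod_lt _ hp.out.pos)
        rw [Nat.div_add_mod] at hT
        rw [Nat.digits_def' hp.out.one_lt h0] at ih' ⊢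
        rw [auxF_cons, ← ih', hT, ← aux_A]
        push_cast [Nat.cast_sub (Nat.succ_le_of_lt hd)]
        ring

end aux

/-- **Corollary.** For a prime `p` and `n ≥ 0` with base-`p` digits `n_l ⋯ n_0`,
`a_{p^2}(n) = (∏_{i=0}^{l} (n_i+1)) · (1 + Σ_{i=0}^{l−1} (n_{i+1}/(n_{i+1}+1))·((p−n_i−1)/(n_i+1)))`. -/
theorem stmt2 (p : ℕ) (hp : p.Prime) (n : ℕ) :
    (rowCount (p ^ 2) n : ℚ) =
      (∏ i ∈ Finset.range (Nat.digits p n).length,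
          (((Nat.digits p n).getD i 0 : ℚ) + 1)) *
        (1 + ∑ i ∈ Finset.range ((Nat.digits p n).length - 1),
          (((Nat.digits p n).getD (i + 1) 0 : ℚ) / (((Nat.digits p n).getD (i + 1) 0 : ℚ) + 1)) *
            (((p : ℚ) - ((Nat.digits p n).getD i 0 : ℚ) - 1) /
              (((Nat.digits p n).getD i 0 : ℚ) + 1))) := by
  have : Fact p.Prime := ⟨hp⟩
  exact aux_F p n
end

section
/- Let p be a prime and let α ≥ 1. There exists a multivariate polynomial Q with rational coefficients, in variables X_w indexed by the nonempty words w of length at most α over the digit alphabet {0,1,…,p−1}, of total degree α − 1, such that for every n ≥ 0 one has a_{p^α}(n) = a_p(n) · Q((|n|_w)_w), the equality read in the rational numbers, where Q is evaluated by substituting |n|_w for X_w. -/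
section helpers
open PowerSeries

/-- pair -/
noncomputable def abw (p : ℕ) : List ℕ → ℚ⟦X⟧ × ℚ⟦X⟧
  | [] => (1, 0)
  | d :: W =>
    ((abw p W).1 + C ((d:ℚ)/(d+1)) * (abw p W).2,
     X * (C (((p:ℚ)-1-d)/(d+1)) * (abw p W).1 + C (((p:ℚ)-d)/(d+1)) * (abw p W).2))

lemma abw_X_dvd (p : ℕ) (W : List ℕ) : (X : ℚ⟦X⟧) ∣ (abw p W).2 := by
  cases W with
  | nil => simp [abw]
  | cons d W => exact Dvd.intro _ rfl

lemma abw_const (p : ℕ) (W : List ℕ) : constantCoeff (abw p W).1 = 1 := by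
  induction W with
  | nil => simp [abw]
  | cons d W ih =>
    have := abw_X_dvd p W
    rw [X_dvd_iff] at this
    simp [abw, ih, this]

lemma abw_det (p k : ℕ) (W : List ℕ) : (X : ℚ⟦X⟧) ^ (k+1) ∣
    (abw p W).1 * (abw p (W.take k)).2 - (abw p W).2 * (abw p (W.take k)).1 := by
  induction k generalizing W with
  | zero => simpa [abw] using abw_X_dvd p W
  | succ k ih =>
    cases W with
    | nil => simp [abw]
    | cons d W =>
      obtain ⟨c, hc⟩ := ih W
      simp only [List.take_succ_cons, abw]
      refine ⟨(C (((p:ℚ)-d)/(d+1)) - C ((d:ℚ)/(d+1)) * C (((p:ℚ)-1-d)/(d+1))) * c, ?_⟩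
      linear_combination (X * (C (((p:ℚ)-d)/(d+1)) - C ((d:ℚ)/(d+1)) * C (((p:ℚ)-1-d)/(d+1)))) * hc

/-- ratio -/
noncomputable def rwd (p : ℕ) (w : List ℕ) : ℚ⟦X⟧ := (abw p w).1 * (abw p w.tail).1⁻¹

lemma rwd_const (p : ℕ) (w : List ℕ) : constantCoeff (rwd p w) = 1 := by
  simp [rwd, abw_const]

/-- windows -/
def wins (α : ℕ) : List ℕ → List (List ℕ)
  | [] => []
  | d :: W => (d :: W).take α :: wins α W

lemma abw_prod (p k : ℕ) (W : List ℕ) : (X : ℚ⟦X⟧) ^ (k+1) ∣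
    (abw p W).1 - ((wins (k+1) W).map (rwd p)).prod := by
  induction W with
  | nil => simp [abw, wins]
  | cons d W ih =>
    simp only [wins, List.map_cons, List.prod_cons, List.take_succ_cons]
    have h1 : (abw p (W.take k)).1 * (abw p (W.take k)).1⁻¹ = 1 :=
      PowerSeries.mul_inv_cancel _ (by rw [abw_const]; exact one_ne_zero)
    obtain ⟨c, hc⟩ := ih
    obtain ⟨e, he⟩ := abw_det p k W
    have h2 : rwd p (d :: W.take k) = (abw p (d :: W.take k)).1 * (abw p (W.take k)).1⁻¹ := rfl
    have h3 : (abw p (d :: W)).1 - rwd p (d :: W.take k) * (abw p W).1 =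
       X^(k+1) * (- C ((d:ℚ)/(d+1)) * e * (abw p (W.take k)).1⁻¹) := by
      rw [h2]
      simp only [abw]
      linear_combination (-((abw p W).1 + C ((d:ℚ)/(d+1)) * (abw p W).2)) * h1 - (C ((d:ℚ)/(d+1)) * (abw p (W.take k)).1⁻¹) * he
    refine ⟨(- C ((d:ℚ)/(d+1)) * e * (abw p (W.take k)).1⁻¹) + rwd p (d :: W.take k) * c, ?_⟩
    linear_combination h3 + rwd p (d :: W.take k) * hc

/-- subword count -/
def sc (w : List ℕ) : List ℕ → ℕ
  | [] => 0
  | d :: W => (if (d :: W).take w.length = w then 1 else 0) + sc w W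

lemma sc_eq (w W : List ℕ) (hw : w ≠ []) :
   ((Finset.range (W.length + 1 - w.length)).filter fun s =>
    (W.drop s).take w.length = w).card = sc w W := by
  have hl : 0 < w.length := List.length_pos_of_ne_nil hw
  have h1 : ((Finset.range (W.length + 1 - w.length)).filter fun s =>
    (W.drop s).take w.length = w) = ((Finset.range W.length).filter fun s =>
    (W.drop s).take w.length = w) := by
    ext s
    simp only [Finset.mem_filter, Finset.mem_range]
    constructor
    · rintro ⟨h, h'⟩; exact ⟨by omega, h'⟩
    · rintro ⟨h, h'⟩
      refine ⟨?_, h'⟩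
      have := congrArg List.length h'
      simp at this
      omega
  rw [h1]
  clear h1
  rw [Finset.card_filter]
  induction W with
  | nil => simp [sc]
  | cons d W ih =>
    rw [List.length_cons, Finset.sum_range_succ']
    simp only [List.drop_succ_cons, List.drop_zero, sc]
    rw [ih, add_comm]

lemma wins_count_full (w W : List ℕ) : (wins w.length W).count w = sc w W := by
  induction W with
  | nil => simp [wins, sc]
  | cons d W ih =>
    simp only [wins, sc, List.count_cons, ih, beq_iff_eq]
    rw [add_comm]

lemma wins_count_part (p α : ℕ) (w W : List ℕ) (hw : w.length < α) (hW : ∀ d ∈ W, d < p) :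
    (wins α W).count w + ∑ d ∈ Finset.range p, sc (w ++ [d]) W = sc w W := by
  induction W with
  | nil => simp [wins, sc]
  | cons e W ih =>
    have ih := ih (fun d hd => hW d (List.mem_cons_of_mem _ hd))
    simp only [wins, sc, List.count_cons, beq_iff_eq, Finset.sum_add_distrib]
    rw [← ih]
    generalize e :: W = U at *
    have : (if List.take α U = w then 1 else 0) + ∑ d ∈ Finset.range p, (if List.take (w ++ [d]).length U = w ++ [d] then 1 else 0) = (if List.take w.length U = w then 1 else 0) := by
      by_cases h : List.take w.length U = w
      · obtain ⟨r, rfl⟩ : ∃ r, U = w ++ r := ⟨U.drop w.length, by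
            have h0 := List.take_append_drop w.length U
            rw [h] at h0; exact h0.symm⟩
        cases r with
        | nil =>
          have h3 : ∀ d, w ≠ w ++ [d] := by intro d h'; simpa using congrArg List.length h'
          have h4 : List.take (w.length + 1) w = w := List.take_of_length_le (by omega)
          simp [List.take_of_length_le hw.le, h4]
        | cons f r =>
          have hf : f < p := hW f (by simp)
          have h1 : List.take α (w ++ f :: r) ≠ w := by
            intro h'
            have := congrArg List.length h'
            simp at this
            omega
          rw [if_neg h1]; simp [List.take_append, hf]
      · have h1 : List.take α U ≠ w := by
          intro h'; apply h
          have : List.take w.length (List.take α U) = w := by rw [h']; simp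
          rwa [List.take_take, min_eq_left hw.le] at this
        have h2 : ∀ d, List.take (w ++ [d]).length U ≠ w ++ [d] := by
          intro d h'; apply h
          have : List.take w.length (List.take (w ++ [d]).length U) = w := by rw [h']; simp
          rwa [List.take_take, min_eq_left (by simp)] at this
        simp only [h, h1, h2]; simp
    omega

lemma sc_zero (p : ℕ) (W : List ℕ) (hW : ∀ d ∈ W, d < p) :
    sc [0] W = ∑ d ∈ Finset.range p, sc [d, 0] W + (if W.head? = some 0 then 1 else 0) := by
  induction W with
  | nil => simp [sc]
  | cons e W ih =>
    have ih := ih (fun d hd => hW d (List.mem_cons_of_mem _ hd))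
    have he : e < p := hW e (by simp)
    simp only [sc, Finset.sum_add_distrib]
    rw [ih]
    have : (∑ d ∈ Finset.range p, if List.take [d,0].length (e :: W) = [d,0] then 1 else 0) = (if W.head? = some 0 then 1 else 0) := by
      cases W with
      | nil => simp
      | cons f W => 
        by_cases hf : f = 0 <;> simp [hf, he]
    rw [this]
    simp
    omega

lemma sum_range_block {M : Type*} [AddCommMonoid M] (c q : ℕ) (f : ℕ → M) :
    ∑ m ∈ Finset.range (c * q), f m =
      ∑ e ∈ Finset.range c, ∑ m ∈ Finset.range q, f (e * q + m) := by
  induction c with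
  | zero => simp
  | succ c ih => rw [Nat.succ_mul, Finset.sum_range_add, ih, Finset.sum_range_succ]

/-- borrow count on `L` positions -/
def bcn (p L n m : ℕ) : ℕ :=
  ∑ i ∈ Finset.range L, if n % p ^ (i + 1) < m % p ^ (i + 1) then 1 else 0

/-- counts without final borrow -/
noncomputable def fA (p L n : ℕ) : ℚ⟦X⟧ :=
  ∑ m ∈ Finset.range (p ^ L), if m ≤ n then X ^ bcn p L n m else 0

/-- counts with final borrow -/
noncomputable def fB (p L n : ℕ) : ℚ⟦X⟧ :=
  ∑ m ∈ Finset.range (p ^ L), if m ≤ n then 0 else X ^ bcn p L n m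

lemma bcn_succ (p L n d m e : ℕ) (hn : n < p ^ L) (hm : m < p ^ L) (hd : d < p) (he : e < p) :
    bcn p (L+1) (d * p ^ L + n) (e * p ^ L + m) =
      bcn p L n m + if d * p ^ L + n < e * p ^ L + m then 1 else 0 := by
  unfold bcn
  rw [Finset.sum_range_succ]
  have key : ∀ x d, ∀ i ∈ Finset.range L, (d * p ^ L + x) % p ^ (i+1) = x % p ^ (i+1) := by
    intro x d i hi
    rw [Finset.mem_range] at hi
    obtain ⟨c, hc⟩ : p ^ (i+1) ∣ d * p ^ L := Dvd.dvd.mul_left (pow_dvd_pow p hi) d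
    rw [hc, Nat.mul_add_mod]
  have big : ∀ x d, x < p ^ L → d < p → (d * p ^ L + x) % p ^ (L+1) = d * p ^ L + x := by
    intro x d hx hd
    apply Nat.mod_eq_of_lt
    rw [pow_succ]
    nlinarith
  rw [big n d hn hd, big m e hm he]
  congr 1
  refine Finset.sum_congr rfl fun i hi => ?_
  rw [key n d i hi, key m e i hi]

lemma sum_three {M : Type*} [AddCommMonoid M] (p d : ℕ) (hd : d < p) (U V Z : M) :
    ∑ e ∈ Finset.range p, (if e < d then U else if e = d then V else Z) =
      d • U + V + (p - 1 - d) • Z := by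
  obtain ⟨k, rfl⟩ : ∃ k, p = d + 1 + k := ⟨p - (d+1), by omega⟩
  rw [Finset.sum_range_add, Finset.sum_range_succ]
  have h1 : ∑ e ∈ Finset.range d, (if e < d then U else if e = d then V else Z) = d • U := by
    rw [Finset.sum_congr rfl (g := fun _ => U)]
    · simp
    · intro e he; rw [Finset.mem_range] at he; simp [he]
  have h2 : ∑ e ∈ Finset.range k, (if d+1+e < d then U else if d+1+e = d then V else Z) = k • Z := by
    rw [Finset.sum_congr rfl (g := fun _ => Z)]
    · simp
    · intro e he
      rw [if_neg (by omega), if_neg (by omega)]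
  rw [h1, h2]
  simp

lemma cmp_lt (q d e n m : ℕ) (hm : m < q) (h : e < d) : e * q + m < d * q + n := by
  have : (e+1) * q ≤ d * q := Nat.mul_le_mul_right _ h
  linarith [Nat.succ_mul e q]

lemma fA_succ (p L n d : ℕ) (hn : n < p ^ L) (hd : d < p) :
    fA p (L+1) (d * p ^ L + n) = ((d:ℚ⟦X⟧)+1) * fA p L n + d * fB p L n := by
  have h0 : fA p (L+1) (d * p ^ L + n) = ∑ e ∈ Finset.range p,
     (if e < d then fA p L n + fB p L n else if e = d then fA p L n else 0) := by
    unfold fA fB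
    rw [pow_succ, mul_comm, sum_range_block]
    refine Finset.sum_congr rfl fun e he => ?_
    rw [Finset.mem_range] at he
    rw [← Finset.sum_add_distrib]
    split_ifs with h1 h2
    · refine Finset.sum_congr rfl fun m hm => ?_
      rw [Finset.mem_range] at hm
      have := cmp_lt (p^L) d e n m hm h1
      rw [bcn_succ p L n d m e hn hm hd he, if_pos this.le, if_neg (by omega)]
      split_ifs <;> simp
    · subst h2
      refine Finset.sum_congr rfl fun m hm => ?_
      rw [Finset.mem_range] at hm
      rw [bcn_succ p L n e m e hn hm hd he]
      simp only [add_le_add_iff_left, add_lt_add_iff_left]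
      split_ifs <;> first | omega | simp
    · refine Finset.sum_eq_zero fun m hm => ?_
      have := cmp_lt (p^L) e d m n hn (by omega)
      rw [if_neg (by omega)]
  rw [h0, sum_three p d hd]
  simp
  ring

lemma fB_succ (p L n d : ℕ) (hn : n < p ^ L) (hd : d < p) :
    fB p (L+1) (d * p ^ L + n) =
      X * (((p:ℚ⟦X⟧)-1-(d:ℚ⟦X⟧)) * fA p L n + ((p:ℚ⟦X⟧)-(d:ℚ⟦X⟧)) * fB p L n) := by
  have h0 : fB p (L+1) (d * p ^ L + n) = ∑ e ∈ Finset.range p,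
     (if e < d then 0 else if e = d then X * fB p L n else X * (fA p L n + fB p L n)) := by
    unfold fA fB
    rw [pow_succ, mul_comm, sum_range_block]
    refine Finset.sum_congr rfl fun e he => ?_
    rw [Finset.mem_range] at he
    rw [← Finset.sum_add_distrib, Finset.mul_sum, Finset.mul_sum]
    split_ifs with h1 h2
    · refine Finset.sum_eq_zero fun m hm => ?_
      rw [Finset.mem_range] at hm
      have := cmp_lt (p^L) d e n m hm h1
      rw [if_pos this.le]
    · subst h2
      refine Finset.sum_congr rfl fun m hm => ?_
      rw [Finset.mem_range] at hm
      rw [bcn_succ p L n e m e hn hm hd he]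
      simp only [add_le_add_iff_left, add_lt_add_iff_left]
      split_ifs <;> first | omega | simp [pow_succ']
    · refine Finset.sum_congr rfl fun m hm => ?_
      rw [Finset.mem_range] at hm
      have := cmp_lt (p^L) e d m n hn (by omega)
      rw [bcn_succ p L n d m e hn hm hd he, if_neg (by omega), if_pos (by omega)]
      split_ifs <;> simp [pow_succ']
  rw [h0, sum_three p d hd]
  have : ((p - 1 - d : ℕ) : ℚ⟦X⟧) = (p:ℚ⟦X⟧) - 1 - d := by
    rw [Nat.cast_sub (by omega), Nat.cast_sub (by omega)]; simp
  rw [nsmul_eq_mul, nsmul_eq_mul, this]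
  ring

lemma fAB_abw (p : ℕ) (D : List ℕ) (hD : ∀ d ∈ D, d < p) :
    Nat.ofDigits p D.reverse < p ^ D.length ∧
    fA p D.length (Nat.ofDigits p D.reverse) =
      C ((D.map fun d : ℕ => (d:ℚ)+1).prod) * (abw p D).1 ∧
    fB p D.length (Nat.ofDigits p D.reverse) =
      C ((D.map fun d : ℕ => (d:ℚ)+1).prod) * (abw p D).2 := by
  induction D with
  | nil => simp [fA, fB, abw, bcn]
  | cons d D ih =>
    obtain ⟨h1, h2, h3⟩ := ih (fun d hd => hD d (List.mem_cons_of_mem _ hd))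
    have hd : d < p := hD d (by simp)
    have e : Nat.ofDigits p (d :: D).reverse = d * p ^ D.length + Nat.ofDigits p D.reverse := by
      rw [List.reverse_cons, Nat.ofDigits_append]; simp; ring
    rw [e, List.length_cons, fA_succ p _ _ d h1 hd, fB_succ p _ _ d h1 hd, h2, h3]
    have hd0 : (d:ℚ) + 1 ≠ 0 := by positivity
    have c1 : (C ((d:ℚ)+1) : ℚ⟦X⟧) = (d:ℚ⟦X⟧) + 1 := by simp
    have c2 : (C ((d:ℚ)+1) : ℚ⟦X⟧) * C ((d:ℚ)/(d+1)) = (d:ℚ⟦X⟧) := by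
      rw [← map_mul, mul_div_cancel₀ _ hd0]; simp
    have c3 : (C ((d:ℚ)+1) : ℚ⟦X⟧) * C (((p:ℚ)-1-d)/(d+1)) = (p:ℚ⟦X⟧)-1-d := by
      rw [← map_mul, mul_div_cancel₀ _ hd0]; simp
    have c4 : (C ((d:ℚ)+1) : ℚ⟦X⟧) * C (((p:ℚ)-d)/(d+1)) = (p:ℚ⟦X⟧)-d := by
      rw [← map_mul, mul_div_cancel₀ _ hd0]; simp
    refine ⟨?_, ?_, ?_⟩
    · have h5 := Nat.mul_le_mul_right (p ^ D.length) (Nat.succ_le_of_lt hd)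
      rw [pow_succ, mul_comm (p ^ D.length) p]
      linarith [Nat.succ_mul d (p ^ D.length)]
    · simp only [abw, List.map_cons, List.prod_cons, map_mul]
      rw [← c1, ← c2]
      ring
    · simp only [abw, List.map_cons, List.prod_cons, map_mul]
      rw [← c3, ← c4]
      ring

lemma val_bcn (p : ℕ) (hp : p.Prime) (L n m : ℕ) (hn : n < p ^ L) (hm : m ≤ n) :
    padicValNat p (n.choose m) = bcn p L n m := by
  have := Fact.mk hp
  rcases Nat.eq_zero_or_pos L with rfl | hL
  · have : n = 0 := by simpa using hn
    subst this
    have : m = 0 := by omega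
    subst this
    simp [bcn]
  have hlog : Nat.log p n < L + 1 := by
    have := Nat.log_lt_of_lt_pow' (b := p) (by omega) hn
    omega
  rw [padicValNat_choose hm hlog, Finset.card_filter, bcn, Finset.sum_Ico_eq_sum_range]
  refine Finset.sum_congr (by simp) fun i _ => ?_
  rw [add_comm 1 i]
  have hq : 0 < p ^ (i+1) := pow_pos hp.pos _
  generalize p ^ (i+1) = q at *
  congr 1
  apply propext
  have h1 := Nat.mod_lt m hq
  have h2 := Nat.mod_lt (n-m) hq
  have h3 : n % q = (m % q + (n - m) % q) % q := by
    rw [← Nat.add_mod]; congr 1; omega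
  rw [h3]
  constructor
  · intro h
    rw [Nat.mod_eq_sub_mod h, Nat.mod_eq_of_lt (by omega)]
    omega
  · intro h
    by_contra h'
    rw [Nat.mod_eq_of_lt (by omega)] at h
    omega

lemma rowCount_fA (p : ℕ) (hp : p.Prime) (L n α : ℕ) (hn : n < p ^ L) :
    (rowCount (p ^ α) n : ℚ) = ∑ β ∈ Finset.range α, coeff β (fA p L n) := by
  have := Fact.mk hp
  unfold fA rowCount
  simp only [map_sum]
  rw [Finset.sum_comm, Finset.card_filter]
  push_cast
  rw [← Finset.sum_subset (Finset.range_subset_range.2 (Nat.succ_le_of_lt hn))]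
  · refine Finset.sum_congr rfl fun m hm => ?_
    have hm : m ≤ n := by rw [Finset.mem_range] at hm; omega
    have hv := padicValNat_dvd_iff_le (p := p) (n := α) (Nat.choose_ne_zero hm)
    rw [val_bcn p hp L n m hn hm] at hv
    simp [hm, hv, coeff_X_pow]
  · intro m _ hm
    have : ¬ m ≤ n := by rw [Finset.mem_range] at hm; omega
    simp [this]

lemma wordOf_lt (p : ℕ) (hp : p.Prime) (n : ℕ) : ∀ d ∈ wordOf p n, d < p := by
  intro d hd
  exact Nat.digits_lt_base hp.one_lt (by simpa [wordOf] using hd)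

lemma rowCount_abw (p : ℕ) (hp : p.Prime) (n α : ℕ) :
    (rowCount (p ^ α) n : ℚ) =
      (rowCount p n : ℚ) * ∑ β ∈ Finset.range α, coeff β (abw p (wordOf p n)).1 := by
  obtain ⟨h1, h2, -⟩ := fAB_abw p (wordOf p n) (wordOf_lt p hp n)
  have e : Nat.ofDigits p (wordOf p n).reverse = n := by simp [wordOf, Nat.ofDigits_digits]
  rw [e] at h1 h2
  have h3 := rowCount_fA p hp _ n 1 h1
  rw [pow_one] at h3
  rw [rowCount_fA p hp _ n α h1, h3, h2]
  simp [abw_const, Finset.mul_sum]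

/-- Families of power series with coefficients polynomial in data -/
def GoodF {σ : Type*} (x : ℕ → σ → ℚ) (F : ℕ → ℚ⟦X⟧) : Prop :=
  ∀ k, ∃ Q : MvPolynomial σ ℚ, Q.totalDegree ≤ k ∧
    ∀ n, coeff k (F n) = MvPolynomial.eval (x n) Q

lemma GoodF.one {σ : Type*} (x : ℕ → σ → ℚ) : GoodF x (fun _ => 1) := by
  intro k
  refine ⟨MvPolynomial.C (coeff k (1 : ℚ⟦X⟧)), by rw [MvPolynomial.totalDegree_C]; exact Nat.zero_le _, by simp⟩

lemma deg_sum_le {σ ι : Type*} (s : Finset ι) (f : ι → MvPolynomial σ ℚ) (k : ℕ)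
    (h : ∀ i ∈ s, (f i).totalDegree ≤ k) : (∑ i ∈ s, f i).totalDegree ≤ k :=
  (MvPolynomial.totalDegree_finsetSum s f).trans (Finset.sup_le h)

lemma GoodF.mul {σ : Type*} {x : ℕ → σ → ℚ} {F G : ℕ → ℚ⟦X⟧} (hF : GoodF x F) (hG : GoodF x G) :
    GoodF x (fun n => F n * G n) := by
  choose P hP hP' using hF
  choose Q hQ hQ' using hG
  intro k
  refine ⟨∑ ij ∈ Finset.HasAntidiagonal.antidiagonal k, P ij.1 * Q ij.2, ?_, ?_⟩
  · refine deg_sum_le _ _ _ fun ij h => ?_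
    rw [Finset.HasAntidiagonal.mem_antidiagonal] at h
    have := MvPolynomial.totalDegree_mul (P ij.1) (Q ij.2)
    have := hP ij.1
    have := hQ ij.2
    omega
  · intro n
    beta_reduce
    rw [coeff_mul, map_sum]
    simp [hP', hQ']

lemma GoodF.prod {σ ι : Type*} {x : ℕ → σ → ℚ} (s : Finset ι) (F : ι → ℕ → ℚ⟦X⟧)
    (h : ∀ i ∈ s, GoodF x (F i)) : GoodF x (fun n => ∏ i ∈ s, F i n) := by
  classical
  induction s using Finset.induction_on with
  | empty => simpa using GoodF.one x
  | insert a s ha ih =>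
    simp only [Finset.prod_insert ha]
    exact (h a (by simp)).mul (ih fun i hi => h i (by simp [hi]))

lemma choose_poly {σ : Type*} (x : ℕ → σ → ℚ) (N : ℕ → ℕ) (l : MvPolynomial σ ℚ)
    (hl : l.totalDegree ≤ 1) (hN : ∀ n, (N n : ℚ) = MvPolynomial.eval (x n) l) (j : ℕ) :
    ∃ Q : MvPolynomial σ ℚ, Q.totalDegree ≤ j ∧
      ∀ n, ((N n).choose j : ℚ) = MvPolynomial.eval (x n) Q := by
  induction j with
  | zero => exact ⟨1, by simp, by simp⟩
  | succ j ih =>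
    obtain ⟨Q, hQ, hQ'⟩ := ih
    refine ⟨MvPolynomial.C (1/((j:ℚ)+1)) * (Q * (l - MvPolynomial.C (j:ℚ))), ?_, ?_⟩
    · have h1 := MvPolynomial.totalDegree_mul (MvPolynomial.C (1/((j:ℚ)+1))) (Q * (l - MvPolynomial.C (j:ℚ)))
      have h2 := MvPolynomial.totalDegree_mul Q (l - MvPolynomial.C (j:ℚ))
      have h3 := MvPolynomial.totalDegree_sub l (MvPolynomial.C (j:ℚ))
      rw [MvPolynomial.totalDegree_C] at h1 h3
      rw [max_eq_left (Nat.zero_le _)] at h3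
      omega
    · intro n
      have h1 : ((N n).choose (j+1) : ℚ) * (j+1) = (N n).choose j * ((N n : ℚ) - j) := by
        rcases le_or_gt j (N n) with h | h
        · rw [← Nat.cast_sub h]
          exact_mod_cast Nat.choose_succ_right_eq (N n) j
        · rw [Nat.choose_eq_zero_of_lt h, Nat.choose_eq_zero_of_lt (by omega)]; simp
      simp only [map_mul, map_sub, MvPolynomial.eval_C]
      rw [← hQ', ← hN]
      have : (j:ℚ) + 1 ≠ 0 := by positivity
      field_simp
      linarith

lemma GoodF.pow {σ : Type*} (x : ℕ → σ → ℚ) (N : ℕ → ℕ) (l : MvPolynomial σ ℚ)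
    (hl : l.totalDegree ≤ 1) (hN : ∀ n, (N n : ℚ) = MvPolynomial.eval (x n) l)
    (R : ℚ⟦X⟧) (hR : constantCoeff R = 1) : GoodF x (fun n => R ^ N n) := by
  choose Q hQ hQ' using choose_poly x N l hl hN
  obtain ⟨S, hS⟩ : X ∣ R - 1 := by rw [X_dvd_iff]; simp [hR]
  intro k
  refine ⟨∑ j ∈ Finset.range (k+1), Q j * MvPolynomial.C (coeff k (X^j * S^j)), ?_, ?_⟩
  · refine deg_sum_le _ _ _ fun j h => ?_
    rw [Finset.mem_range] at h
    have h1 := MvPolynomial.totalDegree_mul (Q j) (MvPolynomial.C (coeff k (X^j * S^j)))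
    rw [MvPolynomial.totalDegree_C] at h1
    have := hQ j
    omega
  · intro n
    have e : R = X * S + 1 := by rw [← hS]; ring
    beta_reduce
    rw [e, add_pow, map_sum, map_sum]
    have t : ∀ j, coeff k ((X * S)^j * 1 ^ (N n - j) * ((N n).choose j : ℚ⟦X⟧)) =
       MvPolynomial.eval (x n) (Q j * MvPolynomial.C (coeff k (X^j * S^j))) := by
      intro j
      rw [map_mul (MvPolynomial.eval (x n)), MvPolynomial.eval_C, ← hQ', one_pow, mul_one, mul_pow, mul_comm]
      rw [show ((N n).choose j : ℚ⟦X⟧) = C ((N n).choose j : ℚ) by simp, coeff_C_mul]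
    simp only [t]
    have z : ∀ j, (k < j ∨ N n < j) → MvPolynomial.eval (x n) (Q j * MvPolynomial.C (coeff k (X^j * S^j))) = 0 := by
      rintro j (h | h)
      · rw [coeff_X_pow_mul', if_neg (by omega)]; simp
      · rw [map_mul, ← hQ', Nat.choose_eq_zero_of_lt h]; simp
    rw [Finset.sum_subset (s₁ := Finset.range (N n + 1)) (s₂ := Finset.range (N n + 1 + (k+1))),
      Finset.sum_subset (s₁ := Finset.range (k + 1)) (s₂ := Finset.range (N n + 1 + (k+1)))]
    · exact Finset.range_subset_range.2 (by omega)
    · intro j _ hj; apply z; left; rw [Finset.mem_range] at hj; omega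
    · exact Finset.range_subset_range.2 (by omega)
    · intro j _ hj; apply z; right; rw [Finset.mem_range] at hj; omega

lemma finite_words (p α : ℕ) :
    {w : List ℕ | w ≠ [] ∧ w.length ≤ α ∧ ∀ d ∈ w, d < p}.Finite := by
  refine ((List.finite_length_le (Fin p) α).image (List.map Fin.val)).subset ?_
  rintro w ⟨-, h1, h2⟩
  refine ⟨w.pmap (fun d h => ⟨d, h⟩) h2, by simpa using h1, ?_⟩
  simp [List.map_pmap]

lemma wins_mem (p α : ℕ) (hα : 1 ≤ α) (W : List ℕ) (hW : ∀ d ∈ W, d < p) :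
    ∀ w ∈ wins α W, w ≠ [] ∧ w.length ≤ α ∧ ∀ d ∈ w, d < p := by
  induction W with
  | nil => simp [wins]
  | cons e W ih =>
    have ih := ih (fun d hd => hW d (List.mem_cons_of_mem _ hd))
    intro w hw
    rw [wins, List.mem_cons] at hw
    rcases hw with rfl | hw
    · refine ⟨?_, by simp, fun d hd => hW d (List.mem_of_mem_take hd)⟩
      simp; omega
    · exact ih w hw

lemma wordOf_head (p n : ℕ) : (wordOf p n).head? ≠ some 0 := by
  rw [wordOf, List.head?_reverse]
  intro h
  rcases Nat.eq_zero_or_pos n with rfl | hn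
  · simp at h
  · have h1 : Nat.digits p n ≠ [] := Nat.digits_ne_nil_iff_ne_zero.2 (by omega)
    rw [List.getLast?_eq_getLast_of_ne_nil h1] at h
    exact Nat.getLast_digit_ne_zero p (Nat.pos_iff_ne_zero.1 hn) (Option.some.inj h)

/-- variable words -/
abbrev WT (p α : ℕ) := {w : List ℕ // w ≠ [] ∧ w.length ≤ α ∧ ∀ d ∈ w, d < p}

open Classical in
/-- the variable, or zero -/
noncomputable def Vr (p α : ℕ) (w : List ℕ) : MvPolynomial (WT p α) ℚ :=
  if h : w ≠ [] ∧ w.length ≤ α ∧ ∀ d ∈ w, d < p then MvPolynomial.X ⟨w, h⟩ else 0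

lemma Vr_deg (p α : ℕ) (w : List ℕ) : (Vr p α w).totalDegree ≤ 1 := by
  unfold Vr
  split_ifs
  · simp
  · simp

lemma Vr_eval (p α n : ℕ) (w : List ℕ) (h : w ≠ [] ∧ w.length ≤ α ∧ ∀ d ∈ w, d < p) :
    MvPolynomial.eval (fun w : WT p α => (subwordCount p n w.1 : ℚ)) (Vr p α w) =
      (sc w (wordOf p n) : ℚ) := by
  rw [Vr, dif_pos h, MvPolynomial.eval_X]
  simp only [subwordCount, sc_eq _ _ h.1]

lemma count_linear (p α : ℕ) (hp : p.Prime) (w : List ℕ)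
    (h : w ≠ [] ∧ w.length ≤ α ∧ ∀ d ∈ w, d < p) :
    ∃ l : MvPolynomial (WT p α) ℚ, l.totalDegree ≤ 1 ∧ ∀ n,
      ((wins α (wordOf p n)).count w : ℚ) =
        MvPolynomial.eval (fun w : WT p α => (subwordCount p n w.1 : ℚ)) l := by
  rcases Nat.lt_or_ge w.length α with hl | hl
  · refine ⟨Vr p α w - ∑ d ∈ Finset.range p, Vr p α (w ++ [d]), ?_, fun n => ?_⟩
    · refine (MvPolynomial.totalDegree_sub _ _).trans (max_le (Vr_deg _ _ _) ?_)
      exact deg_sum_le _ _ _ fun d _ => Vr_deg _ _ _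
    · rw [map_sub, map_sum, Vr_eval p α n w h]
      have h1 := wins_count_part p α w (wordOf p n) hl (wordOf_lt p hp n)
      rw [← h1, Finset.sum_congr rfl (g := fun d => (sc (w ++ [d]) (wordOf p n) : ℚ))]
      · push_cast; ring
      · intro d hd
        rw [Finset.mem_range] at hd
        apply Vr_eval
        refine ⟨by simp, by simp; omega, ?_⟩
        intro e he
        rw [List.mem_append, List.mem_singleton] at he
        rcases he with he | rfl
        · exact h.2.2 e he
        · exact hd
  · have : α = w.length := le_antisymm hl h.2.1
    refine ⟨Vr p α w, Vr_deg _ _ _, fun n => ?_⟩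
    rw [Vr_eval p α n w h]
    conv_lhs => rw [this]
    rw [wins_count_full]

lemma exists_Q (p : ℕ) (hp : p.Prime) (α : ℕ) (hα : 1 ≤ α) :
    ∃ Q : MvPolynomial (WT p α) ℚ, Q.totalDegree ≤ α - 1 ∧
      ∀ n : ℕ, (rowCount (p ^ α) n : ℚ) = (rowCount p n : ℚ) *
          MvPolynomial.eval (fun w => (subwordCount p n w.1 : ℚ)) Q := by
  have hT : ∀ w, w ∈ (finite_words p α).toFinset ↔ (w ≠ [] ∧ w.length ≤ α ∧ ∀ d ∈ w, d < p) := by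
    intro w; simp
  generalize (finite_words p α).toFinset = T at hT
  have good : GoodF (fun n (w : WT p α) => (subwordCount p n w.1 : ℚ))
      (fun n => ∏ w ∈ T, rwd p w ^ (wins α (wordOf p n)).count w) := by
    refine GoodF.prod T (fun w n => rwd p w ^ (wins α (wordOf p n)).count w) fun w hw => ?_
    obtain ⟨l, hl, hl'⟩ := count_linear p α hp w ((hT w).1 hw)
    exact GoodF.pow _ (fun n => (wins α (wordOf p n)).count w) l hl hl' _ (rwd_const p w)
  choose Q hQ hQ' using good
  refine ⟨∑ β ∈ Finset.range α, Q β, ?_, fun n => ?_⟩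
  · refine deg_sum_le _ _ _ fun β hβ => ?_
    rw [Finset.mem_range] at hβ
    have := hQ β
    omega
  · rw [rowCount_abw p hp n α, map_sum]
    congr 1
    refine Finset.sum_congr rfl fun β hβ => ?_
    rw [Finset.mem_range] at hβ
    rw [← hQ' β n]
    beta_reduce
    have e : ∏ w ∈ T, rwd p w ^ (wins α (wordOf p n)).count w =
        ((wins α (wordOf p n)).map (rwd p)).prod := by
      rw [Finset.prod_list_map_count]
      have hb : (instBEqOfDecidableEq : BEq (List ℕ)) = List.instBEq := by
        apply beq_ext
        intro a b
        by_cases hab : a = b <;> simp [hab]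
      rw [hb]
      symm
      apply Finset.prod_subset
      · intro w hw
        rw [hT]
        exact wins_mem p α hα _ (wordOf_lt p hp n) w (by simpa using hw)
      · intro w _ hw
        rw [List.count_eq_zero_of_not_mem (by simpa using hw), pow_zero]
    have h1 := abw_prod p (α - 1) (wordOf p n)
    rw [Nat.sub_add_cancel hα, X_pow_dvd_iff] at h1
    have h2 := h1 β hβ
    rw [map_sub, sub_eq_zero] at h2
    rw [e, h2]

lemma exists_rel (p : ℕ) (hp : p.Prime) (α : ℕ) (hα : 2 ≤ α) :
    ∃ R : MvPolynomial (WT p α) ℚ, R.totalDegree = 1 ∧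
      ∀ n : ℕ, MvPolynomial.eval (fun w => (subwordCount p n w.1 : ℚ)) R = 0 := by
  have hw0 : ([0] : List ℕ) ≠ [] ∧ [0].length ≤ α ∧ ∀ d ∈ [0], d < p :=
    ⟨by simp, by simp; omega, by simpa using hp.pos⟩
  refine ⟨Vr p α [0] - ∑ d ∈ Finset.range p, Vr p α [d, 0], le_antisymm ?_ ?_, fun n => ?_⟩
  · refine (MvPolynomial.totalDegree_sub _ _).trans (max_le (Vr_deg _ _ _) ?_)
    exact deg_sum_le _ _ _ fun d _ => Vr_deg _ _ _
  · have h1 : MvPolynomial.coeff (Finsupp.single (⟨[0], hw0⟩ : WT p α) 1)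
        (Vr p α [0] - ∑ d ∈ Finset.range p, Vr p α [d, 0]) = 1 := by
      classical
      rw [MvPolynomial.coeff_sub, MvPolynomial.coeff_sum, Finset.sum_eq_zero, Vr, dif_pos hw0]
      · simp
      · intro d _
        unfold Vr
        split_ifs
        · rw [MvPolynomial.coeff_X, if_neg]
          intro h
          rw [Finsupp.single_left_inj one_ne_zero] at h
          simp at h
        · simp
    have h2 := MvPolynomial.le_totalDegree (p := Vr p α [0] - ∑ d ∈ Finset.range p, Vr p α [d, 0])
      (s := Finsupp.single (⟨[0], hw0⟩ : WT p α) 1)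
      (by rw [MvPolynomial.mem_support_iff, h1]; exact one_ne_zero)
    simpa using h2
  · rw [map_sub, map_sum, Vr_eval p α n _ hw0, sc_zero p _ (wordOf_lt p hp n),
      if_neg (wordOf_head p n), Finset.sum_congr rfl
        (g := fun d => (sc [d, 0] (wordOf p n) : ℚ))]
    · push_cast; ring
    · intro d hd
      rw [Finset.mem_range] at hd
      apply Vr_eval
      refine ⟨by simp, by simpa using hα, ?_⟩
      simp [hd, hp.pos]

lemma deg_pow_one {σ : Type*} (R : MvPolynomial σ ℚ) (hR : R.totalDegree = 1) (k : ℕ) :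
    (R ^ k).totalDegree = k := by
  have h0 : R ≠ 0 := by rintro rfl; simp at hR
  induction k with
  | zero => simp
  | succ k ih =>
    rw [pow_succ, MvPolynomial.totalDegree_mul_of_isDomain (pow_ne_zero k h0) h0, ih, hR]

end helpers

/-- **Theorem 2.** For a prime `p` and `α ≥ 1`, `a_{p^α}(n)/a_p(n)` is a polynomial of total
degree `α − 1` in the subword counts `|n|_w` for nonempty words `w` of length at most `α`
over the digit alphabet `{0, 1, …, p−1}`. -/
theorem stmt3 (p : ℕ) (hp : p.Prime) (α : ℕ) (hα : 1 ≤ α) :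
    ∃ Q : MvPolynomial {w : List ℕ // w ≠ [] ∧ w.length ≤ α ∧ ∀ d ∈ w, d < p} ℚ,
      Q.totalDegree = α - 1 ∧
      ∀ n : ℕ, (rowCount (p ^ α) n : ℚ) =
        (rowCount p n : ℚ) *
          MvPolynomial.eval (fun w => (subwordCount p n w.1 : ℚ)) Q := by
  obtain ⟨Q, hQ, hQ'⟩ := exists_Q p hp α hα
  rcases hQ.eq_or_lt with h | h
  · exact ⟨Q, h, hQ'⟩
  · obtain ⟨R, hR, hR'⟩ := exists_rel p hp α (by omega)
    refine ⟨Q + R ^ (α - 1), ?_, fun n => ?_⟩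
    · rw [MvPolynomial.totalDegree_add_eq_right_of_totalDegree_lt] <;> rw [deg_pow_one R hR]
      exact h
    · rw [hQ' n, map_add, map_pow, hR' n, zero_pow (by omega), add_zero]
end

section
/- Let b ≥ 2 and let n ≥ 1 have standard base-b digits n_l n_{l−1} ⋯ n_0 (so the leading digit is n_l = ⌊n / b^l⌋ and n′ = n mod b^l is the number with digits n_{l−1} ⋯ n_0). Then for every β ≥ 0, A_n(β) = (n_l + 1) · A_{n′}(β) + n_l · B_{n′}(β), where B_{n′}(β) counts those m with n′ < m ≤ b^l − 1 such that exactly β of the indices 0 ≤ i ≤ l−1 satisfy m mod b^{i+1} > n′ mod b^{i+1}. -/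
theorem aux_count (p : ℕ → Prop) [DecidablePred p] (c : ℕ) (hp : ∀ m, p (c + m) ↔ p m)
    (q r : ℕ) : Nat.count p (q * c + r) = q * Nat.count p c + Nat.count p r := by
  induction q with
  | zero => simp
  | succ q ih =>
    have e : (q + 1) * c + r = c + (q * c + r) := by ring
    rw [e, Nat.count_add]
    simp only [hp]
    rw [ih]; ring

/-- For `b ≥ 2` and `n ≥ 1` with base-`b` digits `n_l ⋯ n_0` (leading digit `n_l = n / b^l`,
`n' = n mod b^l`), for every `β ≥ 0`:
`A_n(β) = (n_l + 1) · A_{n'}(β) + n_l · B_{n'}(β)`, where `B_{n'}(β)` counts those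
`n' < m ≤ b^l − 1` with exactly `β` borrows among positions `0 ≤ i ≤ l−1`. -/
theorem stmt5 (b : ℕ) (hb : 2 ≤ b) (n l : ℕ) (hn : 1 ≤ n)
    (hl : (Nat.digits b n).length = l + 1) (β : ℕ) :
    borrowA b n β =
      (n / b ^ l + 1) * borrowA b (n % b ^ l) β +
        (n / b ^ l) * borrowB b l (n % b ^ l) β := by
  have hb1 : 1 < b := by omega
  have hnlt : n < b ^ (l + 1) := by
    rw [← hl]; exact Nat.lt_base_pow_length_digits hb1
  have hc : 0 < b ^ l := by positivity
  set g : ℕ → ℕ := fun m =>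
    ((Finset.range l).filter fun i => n % b ^ (i + 1) < m % b ^ (i + 1)).card with hg
  have hmod : ∀ i, i < l → ∀ m, m % b ^ l % b ^ (i + 1) = m % b ^ (i + 1) := fun i hi m =>
    Nat.mod_mod_of_dvd m (pow_dvd_pow b (by omega))
  have hper : ∀ m, g (b ^ l + m) = g m := by
    intro m
    simp only [hg]
    congr 1
    apply Finset.filter_congr
    intro i hi
    rw [← hmod i (Finset.mem_range.mp hi) (b ^ l + m), Nat.add_mod_left,
      hmod i (Finset.mem_range.mp hi)]
  set n' := n % b ^ l with hn'
  have hn'lt : n' < b ^ l := Nat.mod_lt _ hc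
  have h1 : borrowA b n β = Nat.count (fun m => g m = β) (n + 1) := by
    rw [Nat.count_eq_card_filter_range]
    unfold borrowA borrowCount
    congr 1
    apply Finset.filter_congr
    intro m hm
    have hm' : m ≤ n := by simpa [Nat.lt_succ_iff] using hm
    rw [hl, Finset.range_add_one, Finset.filter_insert, if_neg]
    rw [Nat.mod_eq_of_lt hnlt, Nat.mod_eq_of_lt (by omega)]
    omega
  have h2 : borrowA b n' β = Nat.count (fun m => g m = β) (n' + 1) := by
    rw [Nat.count_eq_card_filter_range]
    unfold borrowA borrowCount
    congr 1
    apply Finset.filter_congr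
    intro m hm
    have hm' : m ≤ n' := by simpa [Nat.lt_succ_iff] using hm
    have hlen : (Nat.digits b n').length ≤ l := by
      rw [Nat.digits_length_le_iff hb1]; exact hn'lt
    have : (Finset.range (Nat.digits b n').length).filter
          (fun i => n' % b ^ (i + 1) < m % b ^ (i + 1)) =
        (Finset.range l).filter fun i => n % b ^ (i + 1) < m % b ^ (i + 1) := by
      ext i
      simp only [Finset.mem_filter, Finset.mem_range]
      constructor
      · rintro ⟨hi, h⟩
        rw [hn', hmod i (by omega)] at h
        exact ⟨by omega, h⟩
      · rintro ⟨hi, h⟩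
        rw [← hmod i hi n, ← hn'] at h
        refine ⟨?_, h⟩
        by_contra hcon
        have hlt : n' < b ^ (i + 1) := by
          rw [← Nat.digits_length_le_iff hb1]; omega
        rw [Nat.mod_eq_of_lt hlt, Nat.mod_eq_of_lt (by omega)] at h
        omega
    rw [this]
  have h3 : Nat.count (fun m => g m = β) (b ^ l) =
      Nat.count (fun m => g m = β) (n' + 1) + borrowB b l n' β := by
    simp only [Nat.count_eq_card_filter_range]
    have hB : borrowB b l n' β =
        ((Finset.Ioc n' (b ^ l - 1)).filter fun m => g m = β).card := by
      unfold borrowB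
      congr 1
      apply Finset.filter_congr
      intro m _
      have : (Finset.range l).filter (fun i => n' % b ^ (i + 1) < m % b ^ (i + 1)) =
          (Finset.range l).filter fun i => n % b ^ (i + 1) < m % b ^ (i + 1) := by
        apply Finset.filter_congr
        intro i hi
        rw [hn', hmod i (Finset.mem_range.mp hi)]
      rw [this]
    rw [hB, ← Finset.card_union_of_disjoint, ← Finset.filter_union]
    · congr 2
      ext m
      simp only [Finset.mem_union, Finset.mem_range, Finset.mem_Ioc]
      omega
    · apply Finset.disjoint_filter_filter
      rw [Finset.disjoint_left]
      intro m
      simp only [Finset.mem_range, Finset.mem_Ioc]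
      omega
  have e : n + 1 = n / b ^ l * b ^ l + (n' + 1) := by
    have := Nat.div_add_mod' n (b ^ l)
    omega
  rw [h1, h2]
  conv_lhs => rw [e]
  rw [aux_count _ _ (fun m => by rw [hper]), h3]
  ring
end

section
/- Let b ≥ 2 and let n ≥ 1 have standard base-b digits n_l n_{l−1} ⋯ n_0 (so the leading digit is n_l = ⌊n / b^l⌋ and n′ = n mod b^l is the number with digits n_{l−1} ⋯ n_0). Then B_n(0) = 0, and for every β ≥ 1, B_n(β) = (b − n_l − 1) · A_{n′}(β−1) + (b − n_l) · B_{n′}(β−1), where B_{n′} is taken with respect to the l digit positions of n′. -/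
theorem aux_A_s6 (b : ℕ) (hb : 2 ≤ b) (l k m : ℕ) (hk : k < b ^ l) (hm : m ≤ k) :
    borrowCount b k m =
      ((Finset.range l).filter fun i => k % b ^ (i + 1) < m % b ^ (i + 1)).card := by
  unfold borrowCount
  have hlen : (Nat.digits b k).length ≤ l := (Nat.digits_length_le_iff (by omega) k).2 hk
  congr 1
  ext i
  simp only [Finset.mem_filter, Finset.mem_range]
  constructor
  · rintro ⟨h1, h2⟩
    exact ⟨by omega, h2⟩
  · rintro ⟨h1, h2⟩
    refine ⟨?_, h2⟩
    by_contra hc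
    have h3 : k < b ^ (i + 1) :=
      (Nat.digits_length_le_iff (by omega) k).1 (by omega)
    rw [Nat.mod_eq_of_lt h3, Nat.mod_eq_of_lt (by omega)] at h2
    omega

theorem aux_sum (b : ℕ) (hb : 2 ≤ b) (l k β : ℕ) (hk : k < b ^ l) :
    ((Finset.range (b ^ l)).filter fun m =>
      ((Finset.range l).filter fun i => k % b ^ (i + 1) < m % b ^ (i + 1)).card = β).card =
    borrowA b k β + borrowB b l k β := by
  unfold borrowA borrowB
  rw [← Finset.card_union_of_disjoint]
  · congr 1
    ext m
    simp only [Finset.mem_union, Finset.mem_filter, Finset.mem_range, Finset.mem_Ioc]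
    by_cases hm : m ≤ k
    · rw [aux_A_s6 b hb l k m hk hm]
      constructor
      · rintro ⟨h1, h2⟩
        exact Or.inl ⟨by omega, h2⟩
      · rintro (⟨h1, h2⟩ | ⟨h1, h2⟩)
        · exact ⟨by omega, h2⟩
        · omega
    · constructor
      · rintro ⟨h1, h2⟩
        exact Or.inr ⟨by omega, h2⟩
      · rintro (⟨h1, h2⟩ | ⟨h1, h2⟩)
        · omega
        · exact ⟨by omega, h2⟩
  · rw [Finset.disjoint_left]
    intro m h1 h2
    simp only [Finset.mem_filter, Finset.mem_range, Finset.mem_Ioc] at h1 h2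
    omega

theorem aux_cnt (b l n m : ℕ) (hn : n < b ^ (l + 1)) (hm : m < b ^ (l + 1)) (h : n < m) :
    ((Finset.range (l + 1)).filter fun i => n % b ^ (i + 1) < m % b ^ (i + 1)).card =
    ((Finset.range l).filter fun i =>
      (n % b ^ l) % b ^ (i + 1) < (m % b ^ l) % b ^ (i + 1)).card + 1 := by
  rw [Finset.range_add_one, Finset.filter_insert, if_pos (by
    rwa [Nat.mod_eq_of_lt hn, Nat.mod_eq_of_lt hm]), Finset.card_insert_of_notMem (by simp)]
  congr 2
  apply Finset.filter_congr
  intro i hi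
  have hd : b ^ (i + 1) ∣ b ^ l := pow_dvd_pow b (by simpa using hi)
  rw [Nat.mod_mod_of_dvd _ hd, Nat.mod_mod_of_dvd _ hd]

/-- For `b ≥ 2` and `n ≥ 1` with base-`b` digits `n_l ⋯ n_0` (leading digit `n_l = n / b^l`,
`n' = n mod b^l`): `B_n(0) = 0`, and for every `β ≥ 1`,
`B_n(β) = (b − n_l − 1) · A_{n'}(β−1) + (b − n_l) · B_{n'}(β−1)`,
where `B_n` is taken with respect to the `l+1` digit positions of `n` and `B_{n'}` with
respect to the `l` digit positions of `n'`. -/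
theorem stmt6 (b : ℕ) (hb : 2 ≤ b) (n l : ℕ) (hn : 1 ≤ n)
    (hl : (Nat.digits b n).length = l + 1) :
    borrowB b (l + 1) n 0 = 0 ∧
    ∀ β : ℕ, 1 ≤ β →
      borrowB b (l + 1) n β =
        (b - n / b ^ l - 1) * borrowA b (n % b ^ l) (β - 1) +
          (b - n / b ^ l) * borrowB b l (n % b ^ l) (β - 1) := by
  have hN : n < b ^ (l + 1) := (Nat.digits_length_le_iff (by omega) n).1 hl.le
  have hP : 0 < b ^ l := pow_pos (by omega) l
  constructor
  · unfold borrowB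
    rw [Finset.card_eq_zero, Finset.filter_eq_empty_iff]
    intro m hm
    rw [Finset.mem_Ioc] at hm
    rw [aux_cnt b l n m hN (by omega) hm.1]
    omega
  · intro β hβ
    have hS := aux_sum b hb l (n % b ^ l) (β - 1) (Nat.mod_lt _ hP)
    have hpow : b ^ (l + 1) = b * b ^ l := by ring
    have hdb : n / b ^ l < b := by
      rw [Nat.div_lt_iff_lt_mul hP]; omega
    set d := n / b ^ l with hd
    set k := n % b ^ l with hk
    have hnd : b ^ l * d + k = n := Nat.div_add_mod n (b ^ l)
    have key : borrowB b (l + 1) n β =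
        ((Finset.Ioo d b ×ˢ (Finset.range (b ^ l)).filter fun m =>
          ((Finset.range l).filter fun i => k % b ^ (i + 1) < m % b ^ (i + 1)).card = β - 1) ∪
        ({d} ×ˢ (Finset.Ioc k (b ^ l - 1)).filter fun m =>
    ((Finset.range l).filter fun i => k % b ^ (i + 1) < m % b ^ (i + 1)).card = β - 1)).card := by
      unfold borrowB
      refine Finset.card_bij' (fun m _ => (m / b ^ l, m % b ^ l))
        (fun p _ => b ^ l * p.1 + p.2) ?_ ?_ ?_ ?_
      · intro m hm
        simp only [Finset.mem_filter, Finset.mem_Ioc] at hm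
        obtain ⟨⟨h1, h2⟩, h3⟩ := hm
        rw [aux_cnt b l n m hN (by omega) h1, ← hk] at h3
        replace h3 := Nat.eq_sub_of_add_eq h3
        have hr := Nat.mod_lt m hP
        have hq : m / b ^ l < b := by
          rw [Nat.div_lt_iff_lt_mul hP]; omega
        have hdq : d ≤ m / b ^ l := Nat.div_le_div_right h1.le
        have hm := Nat.div_add_mod m (b ^ l)
        simp only [Finset.mem_union, Finset.mem_product, Finset.mem_filter, Finset.mem_Ioc,
          Finset.mem_Ioo, Finset.mem_range, Finset.mem_singleton]
        rcases hdq.lt_or_eq with h | h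
        · exact Or.inl ⟨⟨h, hq⟩, hr, h3⟩
        · refine Or.inr ⟨h.symm, ⟨?_, by omega⟩, h3⟩
          rw [← h] at hm
          omega
      · rintro ⟨q, r⟩ hp
        simp only [Finset.mem_union, Finset.mem_product, Finset.mem_filter, Finset.mem_Ioc,
          Finset.mem_Ioo, Finset.mem_range, Finset.mem_singleton] at hp ⊢
        have hkl : k < b ^ l := Nat.mod_lt _ hP
        have main : n < b ^ l * q + r ∧ q < b ∧ r < b ^ l ∧
            ((Finset.range l).filter fun i => k % b ^ (i + 1) < r % b ^ (i + 1)).card = β - 1 := by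
          rcases hp with ⟨⟨h1, h2⟩, h3, h4⟩ | ⟨h1, ⟨h2, h3⟩, h4⟩
          · have := Nat.mul_le_mul_left (b ^ l) (show d + 1 ≤ q from h1)
            rw [mul_add] at this
            exact ⟨by omega, h2, h3, h4⟩
          · subst h1
            exact ⟨by omega, hdb, by omega, h4⟩
        obtain ⟨h1, h2, h3, h4⟩ := main
        have hlt : b ^ l * q + r < b ^ (l + 1) := by
          have := Nat.mul_le_mul_left (b ^ l) (show q + 1 ≤ b from h2)
          rw [mul_add] at this
          rw [pow_succ]
          omega
        refine ⟨⟨h1, by omega⟩, ?_⟩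
        rw [aux_cnt b l n _ hN hlt h1, Nat.mul_add_mod, Nat.mod_eq_of_lt h3, ← hk, h4]
        omega
      · intro m _
        exact Nat.div_add_mod m (b ^ l)
      · rintro ⟨q, r⟩ hp
        have hr : r < b ^ l := by
          simp only [Finset.mem_union, Finset.mem_product, Finset.mem_filter, Finset.mem_Ioc,
            Finset.mem_Ioo, Finset.mem_range, Finset.mem_singleton] at hp
          omega
        simp only [Nat.mul_add_mod, Nat.mod_eq_of_lt hr, Nat.mul_add_div hP,
          Nat.div_eq_of_lt hr, add_zero]
    rw [key, Finset.card_union_of_disjoint, Finset.card_product, Finset.card_product, hS,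
      Nat.card_Ioo, Finset.card_singleton]
    · rw [show b - d = (b - d - 1) + 1 by omega, Nat.add_sub_cancel]
      unfold borrowB
      ring
    · rw [Finset.disjoint_left]
      rintro ⟨q, r⟩ h1 h2
      simp only [Finset.mem_product, Finset.mem_Ioo, Finset.mem_singleton] at h1 h2
      omega
end

section
/- Let b ≥ 2 and let n ≥ 1 have standard base-b digits n_l n_{l−1} ⋯ n_0. For 0 ≤ β ≤ l, writing n^{(k)} = n mod b^{l+1−k} (the number whose digits are the last l+1−k digits n_{l−k} ⋯ n_0 of n) and n′ = n^{(1)}, one has A_n(β) = (n_l + 1) · A_{n′}(β) + Σ_{i=1}^{β} n_l · (∏_{j=1}^{i−1} (b − n_{l−j})) · (b − n_{l−i} − 1) · A_{n^{(i+1)}}(β − i). -/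
def cB (b n L m : ℕ) : ℕ :=
  ((Finset.range L).filter fun i => n % b ^ (i + 1) < m % b ^ (i + 1)).card

def aB (b n L β : ℕ) : ℕ :=
  ∑ m ∈ Finset.range (b ^ L), if m ≤ n % b ^ L ∧ cB b n L m = β then 1 else 0

def gB (b n L β : ℕ) : ℕ :=
  ∑ m ∈ Finset.range (b ^ L), if n % b ^ L < m ∧ cB b n L m = β then 1 else 0

theorem sum_split_s7 (f : ℕ → ℕ) (N b : ℕ) :
    ∑ m ∈ Finset.range (N * b), f m
      = ∑ d ∈ Finset.range b, ∑ r ∈ Finset.range N, f (N * d + r) := by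
  induction b with
  | zero => simp
  | succ k ih => rw [Finset.sum_range_succ, ← ih, Nat.mul_succ, Finset.sum_range_add]

theorem cB_succ (b n L d r : ℕ) (hd : d < b) (hr : r < b ^ L) :
    cB b n (L + 1) (b ^ L * d + r) =
      cB b n L r + if n % b ^ (L + 1) < b ^ L * d + r then 1 else 0 := by
  have hlt : b ^ L * d + r < b ^ (L + 1) := by
    rw [pow_succ]
    nlinarith
  unfold cB
  rw [Finset.range_add_one, Finset.filter_insert, Nat.mod_eq_of_lt hlt]
  have h2 : (Finset.range L).filter (fun i => n % b ^ (i + 1) < (b ^ L * d + r) % b ^ (i + 1))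
      = (Finset.range L).filter (fun i => n % b ^ (i + 1) < r % b ^ (i + 1)) := by
    apply Finset.filter_congr
    intro i hi
    have hi := Finset.mem_range.1 hi
    have hdv : b ^ (i + 1) ∣ b ^ L * d := Dvd.dvd.mul_right (pow_dvd_pow b (by omega)) d
    obtain ⟨q, hq⟩ := hdv
    rw [hq, Nat.mul_add_mod]
  rw [h2]
  split_ifs with h
  · rw [Finset.card_insert_of_notMem (by simp)]
  · simp

theorem top_lt (b n L d r : ℕ) (hr : r < b ^ L) :
    n % b ^ (L + 1) < b ^ L * d + r ↔
      (n / b ^ L % b < d ∨ (n / b ^ L % b = d ∧ n % b ^ L < r)) := by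
  have hN : 0 < b ^ L := by omega
  rw [pow_succ, Nat.mod_mul]
  have h1 := Nat.mod_lt n hN
  generalize n % b ^ L = x at *
  generalize n / b ^ L % b = e at *
  generalize b ^ L = N at *
  rcases lt_trichotomy e d with h | h | h
  · have : N * (e + 1) ≤ N * d := Nat.mul_le_mul_left _ h
    constructor
    · intro _; exact Or.inl h
    · intro _; nlinarith
  · subst h
    constructor
    · intro _; right; constructor <;> omega
    · intro _; omega
  · have : N * (d + 1) ≤ N * e := Nat.mul_le_mul_left _ h
    constructor
    · intro _; nlinarith
    · intro _; omega

theorem cnt_le (b e : ℕ) (he : e < b) :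
    ∑ d ∈ Finset.range b, (if d ≤ e then 1 else 0) = e + 1 := by
  rw [← Finset.card_filter]
  have : (Finset.range b).filter (fun d => d ≤ e) = Finset.range (e + 1) := by
    ext d; simp; omega
  rw [this, Finset.card_range]

theorem cnt_lt (b e : ℕ) (he : e < b) :
    ∑ d ∈ Finset.range b, (if d < e then 1 else 0) = e := by
  rw [← Finset.card_filter]
  have : (Finset.range b).filter (fun d => d < e) = Finset.range e := by
    ext d; simp; omega
  rw [this, Finset.card_range]

theorem cnt_gt (b e : ℕ) :
    ∑ d ∈ Finset.range b, (if e < d then 1 else 0) = b - e - 1 := by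
  rw [← Finset.card_filter]
  have : (Finset.range b).filter (fun d => e < d) = Finset.Ico (e + 1) b := by
    ext d; simp; omega
  rw [this, Nat.card_Ico]; omega

theorem cnt_ge (b e : ℕ) :
    ∑ d ∈ Finset.range b, (if e ≤ d then 1 else 0) = b - e := by
  rw [← Finset.card_filter]
  have : (Finset.range b).filter (fun d => e ≤ d) = Finset.Ico e b := by
    ext d; simp; omega
  rw [this, Nat.card_Ico]

theorem aB_succ (b n L β : ℕ) (hb : 2 ≤ b) :
    aB b n (L + 1) β = (n / b ^ L % b + 1) * aB b n L β + (n / b ^ L % b) * gB b n L β := by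
  have he : n / b ^ L % b < b := Nat.mod_lt _ (by omega)
  conv_lhs => rw [aB]
  conv_lhs => arg 1; rw [pow_succ]
  rw [sum_split_s7]
  conv_rhs => 
    rw [← cnt_le b _ he]
    arg 2; arg 1; rw [← cnt_lt b _ he]
  rw [Finset.sum_mul, Finset.sum_mul, ← Finset.sum_add_distrib]
  apply Finset.sum_congr rfl
  intro d hd
  rw [aB, gB, Finset.mul_sum, Finset.mul_sum, ← Finset.sum_add_distrib]
  apply Finset.sum_congr rfl
  intro r hr
  have hd := Finset.mem_range.1 hd
  have hr := Finset.mem_range.1 hr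
  rw [cB_succ b n L d r hd hr]
  simp only [← not_lt (a := n % b ^ (L + 1)), top_lt b n L d r hr]
  generalize n % b ^ L = x at *
  generalize n / b ^ L % b = e at *
  generalize cB b n L r = c at *
  split_ifs <;> omega

theorem gB_succ (b n L β : ℕ) :
    gB b n (L + 1) (β + 1) =
      (b - n / b ^ L % b - 1) * aB b n L β + (b - n / b ^ L % b) * gB b n L β := by
  conv_lhs => rw [gB]
  conv_lhs => arg 1; rw [pow_succ]
  rw [sum_split_s7]
  conv_rhs => 
    rw [← cnt_gt b _]
    arg 2; arg 1; rw [← cnt_ge b _]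
  rw [Finset.sum_mul, Finset.sum_mul, ← Finset.sum_add_distrib]
  apply Finset.sum_congr rfl
  intro d hd
  rw [aB, gB, Finset.mul_sum, Finset.mul_sum, ← Finset.sum_add_distrib]
  apply Finset.sum_congr rfl
  intro r hr
  have hd := Finset.mem_range.1 hd
  have hr := Finset.mem_range.1 hr
  rw [cB_succ b n L d r hd hr]
  simp only [top_lt b n L d r hr]
  generalize n % b ^ L = x at *
  generalize n / b ^ L % b = e at *
  generalize cB b n L r = c at *
  split_ifs <;> omega

theorem gB_zero (b n L : ℕ) : gB b n L 0 = 0 := by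
  unfold gB
  apply Finset.sum_eq_zero
  intro m hm
  have hm := Finset.mem_range.1 hm
  rw [if_neg]
  rintro ⟨h1, h2⟩
  cases L with
  | zero => simp at hm; subst hm; exact absurd h1 (Nat.not_lt_zero _)
  | succ k =>
    unfold cB at h2
    rw [Finset.card_eq_zero, Finset.filter_eq_empty_iff] at h2
    have := h2 (x := k) (by simp)
    rw [Nat.mod_eq_of_lt hm] at this
    exact this h1

theorem gB_eq (b n β : ℕ) : ∀ l, β ≤ l → gB b n l β =
    ∑ i ∈ Finset.range β, (∏ j ∈ Finset.range i, (b - n / b ^ (l - (j + 1)) % b)) *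
      (b - n / b ^ (l - (i + 1)) % b - 1) * aB b n (l - (i + 1)) (β - (i + 1)) := by
  induction β with
  | zero => intro l _; simp [gB_zero]
  | succ k ih =>
    intro l hl
    obtain ⟨l, rfl⟩ : ∃ l', l = l' + 1 := ⟨l - 1, by omega⟩
    rw [gB_succ, ih l (by omega), Finset.sum_range_succ', add_comm, Finset.mul_sum]
    congr 1
    · apply Finset.sum_congr rfl
      intro i hi
      rw [Finset.prod_range_succ']
      simp only [Nat.add_sub_add_right, zero_add, Nat.sub_zero]
      have e1 : l + 1 - 1 = l := rfl
      rw [e1]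
      ring
    · simp

theorem borrowA_eq (b n L β : ℕ) (hb : 2 ≤ b) : borrowA b (n % b ^ L) β = aB b n L β := by
  have hN : 0 < b ^ L := by positivity
  have hlt : n % b ^ L < b ^ L := Nat.mod_lt _ hN
  unfold borrowA aB
  rw [← Finset.card_filter]
  congr 1
  ext m
  simp only [Finset.mem_filter, Finset.mem_range]
  have key : m ≤ n % b ^ L → borrowCount b (n % b ^ L) m = cB b n L m := by
    intro hm
    unfold borrowCount cB
    congr 1
    have hlen : (Nat.digits b (n % b ^ L)).length ≤ L :=
      (Nat.digits_length_le_iff (by omega) _).2 hlt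
    have hlt2 : n % b ^ L < b ^ (Nat.digits b (n % b ^ L)).length :=
      Nat.lt_base_pow_length_digits (by omega)
    ext i
    simp only [Finset.mem_filter, Finset.mem_range]
    have hmod : i < L → n % b ^ L % b ^ (i + 1) = n % b ^ (i + 1) := fun h =>
      Nat.mod_mod_of_dvd _ (pow_dvd_pow b (by omega))
    constructor
    · rintro ⟨h1, h2⟩
      have h3 : i < L := by omega
      rw [hmod h3] at h2
      exact ⟨h3, h2⟩
    · rintro ⟨h1, h2⟩
      rw [← hmod h1] at h2
      refine ⟨?_, h2⟩
      by_contra hc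
      have h4 : n % b ^ L < b ^ (i + 1) :=
        lt_of_lt_of_le hlt2 (Nat.pow_le_pow_right (by omega) (by omega))
      rw [Nat.mod_eq_of_lt h4, Nat.mod_eq_of_lt (lt_of_le_of_lt hm h4)] at h2
      omega
  constructor
  · rintro ⟨h1, h2⟩
    have h3 : m ≤ n % b ^ L := by omega
    rw [key h3] at h2
    exact ⟨by omega, h3, h2⟩
  · rintro ⟨h1, h3, h2⟩
    rw [key h3]
    exact ⟨by omega, h2⟩

/-- For `b ≥ 2`, `n ≥ 1` with base-`b` digits `n_l ⋯ n_0`, and `0 ≤ β ≤ l`, writing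
`n^{(k)} = n mod b^{l+1−k}` and `n' = n^{(1)} = n mod b^l`:
`A_n(β) = (n_l + 1) · A_{n'}(β)
  + Σ_{i=1}^{β} n_l · (∏_{j=1}^{i−1} (b − n_{l−j})) · (b − n_{l−i} − 1) · A_{n^{(i+1)}}(β−i)`. -/
theorem stmt7 (b : ℕ) (hb : 2 ≤ b) (n l β : ℕ) (hn : 1 ≤ n)
    (hl : (Nat.digits b n).length = l + 1) (hβ : β ≤ l) :
    borrowA b n β =
      (n / b ^ l % b + 1) * borrowA b (n % b ^ l) β +
        ∑ i ∈ Finset.Icc 1 β,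
          (n / b ^ l % b) * (∏ j ∈ Finset.Icc 1 (i - 1), (b - n / b ^ (l - j) % b)) *
            (b - n / b ^ (l - i) % b - 1) * borrowA b (n % b ^ (l - i)) (β - i) := by
  have hlt : n < b ^ (l + 1) := by
    rw [← hl]; exact Nat.lt_base_pow_length_digits (by omega)
  have h0 : borrowA b n β = aB b n (l + 1) β := by
    rw [← borrowA_eq b n (l + 1) β hb, Nat.mod_eq_of_lt hlt]
  rw [h0, aB_succ b n l β hb, gB_eq b n β l hβ, borrowA_eq b n l β hb, Finset.mul_sum]
  congr 1
  have hI : ∀ k, Finset.Icc 1 k = Finset.Ico 1 (k + 1) := by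
    intro k; ext x; simp only [Finset.mem_Icc, Finset.mem_Ico]; omega
  simp only [hI, Finset.sum_Ico_eq_sum_range, Finset.prod_Ico_eq_prod_range]
  apply Finset.sum_congr (by simp)
  intro i _
  rw [borrowA_eq b n _ _ hb]
  simp only [Nat.add_sub_cancel, Nat.add_sub_cancel_left, add_comm 1]
  ring
end

section
/- Let b ≥ 2 and let n ≥ 1 have standard base-b digits n_l n_{l−1} ⋯ n_0, and let 0 ≤ β ≤ l. Writing n^{(k)} = n mod b^{l+1−k} (the number whose digits are the last l+1−k digits of n), one has the identity in the rational numbers: A_n(β)/A_n(0) − A_{n^{(l−β+1)}}(β)/A_{n^{(l−β+1)}}(0) = Σ_{j=0}^{l−β} Σ_{i=1}^{β} c(n_{l−j} n_{l−j−1} ⋯ n_{l−j−i}) · A_{n^{(j+i+1)}}(β−i)/A_{n^{(j+i+1)}}(0). -/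
namespace S9

def cnt (b L n m : ℕ) : ℕ :=
  ((Finset.range L).filter fun i => n % b ^ (i + 1) < m % b ^ (i + 1)).card

def a (b n L β : ℕ) : ℚ :=
  ∑ m ∈ Finset.range (b ^ L), if m ≤ n % b ^ L ∧ cnt b L n m = β then 1 else 0

def B (b n L β : ℕ) : ℚ :=
  ∑ m ∈ Finset.range (b ^ L), if n % b ^ L < m ∧ cnt b L n m = β then 1 else 0

def dg (b n L : ℕ) : ℕ := n / b ^ L % b

lemma sum_split (N k : ℕ) (f : ℕ → ℚ) :
    ∑ m ∈ Finset.range (N * k), f m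
      = ∑ m ∈ Finset.range N, ∑ e ∈ Finset.range k, f (m + N * e) := by
  rw [Finset.sum_comm]
  induction k with
  | zero => simp
  | succ k ih =>
    rw [Nat.mul_succ, Finset.sum_range_add, ih, Finset.sum_range_succ]
    congr 1
    exact Finset.sum_congr rfl fun x _ => by rw [add_comm]

lemma cnt_add (b L n m e : ℕ) : cnt b L n (m + b ^ L * e) = cnt b L n m := by
  unfold cnt
  congr 1
  apply Finset.filter_congr
  intro i hi
  have hi' : i + 1 ≤ L := Finset.mem_range.mp hi
  obtain ⟨k, rfl⟩ := Nat.exists_eq_add_of_le hi'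
  rw [pow_add b (i + 1) k, mul_assoc, Nat.add_mul_mod_self_left]

lemma cnt_succ (b L n m : ℕ) : cnt b (L + 1) n m =
    cnt b L n m + if n % b ^ (L + 1) < m % b ^ (L + 1) then 1 else 0 := by
  unfold cnt
  rw [Finset.range_add_one, Finset.filter_insert]
  split_ifs with h
  · rw [Finset.card_insert_of_notMem (by simp)]
  · simp

lemma cmp (N m' n' e d : ℕ) (h1 : m' < N) (h2 : n' < N) :
    m' + N * e ≤ n' + N * d ↔ if m' ≤ n' then e < d + 1 else e < d := by
  split_ifs with h
  · constructor
    · intro h3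
      by_contra h4
      have : N * (d + 1) ≤ N * e := Nat.mul_le_mul_left _ (by omega)
      rw [Nat.mul_succ] at this
      omega
    · intro h3
      have : N * e ≤ N * d := Nat.mul_le_mul_left _ (by omega)
      omega
  · constructor
    · intro h3
      by_contra h4
      have : N * d ≤ N * e := Nat.mul_le_mul_left _ (by omega)
      omega
    · intro h3
      have : N * (e + 1) ≤ N * d := Nat.mul_le_mul_left _ (by omega)
      rw [Nat.mul_succ] at this
      omega

lemma sum_lt (k c : ℕ) (hc : c ≤ k) :
    ∑ e ∈ Finset.range k, (if e < c then (1:ℚ) else 0) = c := by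
  rw [← Finset.sum_filter]
  have : (Finset.range k).filter (fun e => e < c) = Finset.range c := by
    ext x; simp; omega
  rw [this]; simp

lemma sum_ge (k c : ℕ) (hc : c ≤ k) :
    ∑ e ∈ Finset.range k, (if ¬ e < c then (1:ℚ) else 0) = k - c := by
  have h : ∀ e : ℕ, (if ¬ e < c then (1:ℚ) else 0) = 1 - (if e < c then (1:ℚ) else 0) := by
    intro e; split_ifs <;> simp
  simp only [h, Finset.sum_sub_distrib, sum_lt k c hc]
  simp

lemma a_succ (b : ℕ) (hb : 2 ≤ b) (n L β : ℕ) :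
    a b n (L + 1) β = ((dg b n L : ℚ) + 1) * a b n L β + dg b n L * B b n L β := by
  have hN : 0 < b ^ L := by positivity
  have hd : dg b n L < b := Nat.mod_lt _ (by omega)
  unfold a B
  rw [pow_succ, sum_split, Finset.mul_sum, Finset.mul_sum, ← Finset.sum_add_distrib]
  apply Finset.sum_congr rfl
  intro m hm
  have hm := Finset.mem_range.mp hm
  have hn := Nat.mod_lt n hN
  have key : ∀ e ∈ Finset.range b,
      (if m + b ^ L * e ≤ n % (b ^ L * b) ∧ cnt b (L + 1) n (m + b ^ L * e) = β
        then (1:ℚ) else 0) =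
      (if e < (if m ≤ n % b ^ L then dg b n L + 1 else dg b n L) then 1 else 0) *
        (if cnt b L n m = β then 1 else 0) := by
    intro e he
    have he := Finset.mem_range.mp he
    have hlt : m + b ^ L * e < b ^ (L + 1) := by
      have : b ^ L * (e + 1) ≤ b ^ L * b := Nat.mul_le_mul_left _ (by omega)
      rw [Nat.mul_succ] at this
      rw [pow_succ]; omega
    have hc := cmp (b ^ L) m (n % b ^ L) e (dg b n L) hm hn
    rw [cnt_succ, cnt_add, Nat.mod_eq_of_lt hlt, pow_succ, Nat.mod_mul]
    change (if m + b ^ L * e ≤ n % b ^ L + b ^ L * dg b n L ∧ cnt b L n m +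
      (if n % b ^ L + b ^ L * dg b n L < _ then _ else _) = β then (1:ℚ) else 0) = _
    simp only [← not_le]
    split_ifs at hc ⊢ <;> simp_all <;> omega
  rw [Finset.sum_congr rfl key, ← Finset.sum_mul]
  by_cases h : m ≤ n % b ^ L
  · rw [if_pos h, sum_lt _ _ (by omega)]
    simp [h, not_lt.mpr h]
  · rw [if_neg h, sum_lt _ _ (by omega)]
    simp [h, not_le.mp h]

lemma B_key (b : ℕ) (hb : 2 ≤ b) (n L β : ℕ) (m e : ℕ) (hm : m < b ^ L) (he : e < b) :
      (if n % (b ^ L * b) < m + b ^ L * e ∧ cnt b (L + 1) n (m + b ^ L * e) = β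
        then (1:ℚ) else 0) =
      (if ¬ e < (if m ≤ n % b ^ L then dg b n L + 1 else dg b n L) then 1 else 0) *
        (if cnt b L n m + 1 = β then 1 else 0) := by
  have hN : 0 < b ^ L := by positivity
  have hn := Nat.mod_lt n hN
  have hlt : m + b ^ L * e < b ^ (L + 1) := by
    have : b ^ L * (e + 1) ≤ b ^ L * b := Nat.mul_le_mul_left _ (by omega)
    rw [Nat.mul_succ] at this
    rw [pow_succ]; omega
  have hc := cmp (b ^ L) m (n % b ^ L) e (dg b n L) hm hn
  rw [cnt_succ, cnt_add, Nat.mod_eq_of_lt hlt, pow_succ, Nat.mod_mul]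
  change (if n % b ^ L + b ^ L * dg b n L < m + b ^ L * e ∧ cnt b L n m +
    (if n % b ^ L + b ^ L * dg b n L < _ then _ else _) = β then (1:ℚ) else 0) = _
  simp only [← not_le]
  split_ifs at hc ⊢ <;> simp_all

lemma B_succ (b : ℕ) (hb : 2 ≤ b) (n L β : ℕ) :
    B b n (L + 1) (β + 1) =
      ((b : ℚ) - dg b n L - 1) * a b n L β + ((b : ℚ) - dg b n L) * B b n L β := by
  have hd : dg b n L < b := Nat.mod_lt _ (by omega)
  unfold a B
  rw [pow_succ, sum_split, Finset.mul_sum, Finset.mul_sum, ← Finset.sum_add_distrib]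
  apply Finset.sum_congr rfl
  intro m hm
  have hm := Finset.mem_range.mp hm
  rw [Finset.sum_congr rfl fun e he => B_key b hb n L (β + 1) m e hm (Finset.mem_range.mp he),
    ← Finset.sum_mul]
  by_cases h : m ≤ n % b ^ L
  · rw [if_pos h, sum_ge _ _ (by omega)]
    by_cases hq : cnt b L n m = β
    · simp [h, not_lt.mpr h, hq]; ring
    · simp [hq]
  · rw [if_neg h, sum_ge _ _ (by omega)]
    simp [h, not_le.mp h]

lemma B_zero (b : ℕ) (hb : 2 ≤ b) (n L : ℕ) : B b n L 0 = 0 := by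
  cases L with
  | zero => simp [B, Nat.mod_one]
  | succ L =>
    unfold B
    rw [pow_succ, sum_split]
    apply Finset.sum_eq_zero
    intro m hm
    apply Finset.sum_eq_zero
    intro e he
    rw [B_key b hb n L 0 m e (Finset.mem_range.mp hm) (Finset.mem_range.mp he)]
    simp

lemma a_zero_pos (b : ℕ) (hb : 2 ≤ b) (n L : ℕ) : 0 < a b n L 0 := by
  induction L with
  | zero => simp [a, cnt, Finset.filter_singleton]
  | succ L ih => rw [a_succ b hb, B_zero b hb]; positivity

lemma borrowA_eq (b : ℕ) (hb : 2 ≤ b) (n L β : ℕ) :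
    (borrowA b (n % b ^ L) β : ℚ) = a b n L β := by
  have hN : 0 < b ^ L := by positivity
  have hn := Nat.mod_lt n hN
  unfold borrowA a
  rw [Finset.sum_boole]
  congr 2
  ext m
  simp only [Finset.mem_filter, Finset.mem_range]
  have hc : m ≤ n % b ^ L → borrowCount b (n % b ^ L) m = cnt b L n m := by
    intro hm
    unfold borrowCount cnt
    have hlen : (Nat.digits b (n % b ^ L)).length ≤ L :=
      (Nat.digits_length_le_iff (by omega) _).mpr hn
    congr 1
    ext i
    simp only [Finset.mem_filter, Finset.mem_range]
    have hmod : i < L → n % b ^ L % b ^ (i + 1) = n % b ^ (i + 1) := fun hi =>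
      Nat.mod_mod_of_dvd _ (pow_dvd_pow _ hi)
    constructor
    · rintro ⟨h1, h2⟩
      have h3 : i < L := by omega
      rw [hmod h3] at h2
      exact ⟨h3, h2⟩
    · rintro ⟨h1, h2⟩
      rw [← hmod h1] at h2
      refine ⟨?_, h2⟩
      by_contra h4
      have h5 : n % b ^ L < b ^ (i + 1) :=
        (Nat.digits_length_le_iff (by omega) _).mp (by omega)
      rw [Nat.mod_eq_of_lt h5, Nat.mod_eq_of_lt (lt_of_le_of_lt hm h5)] at h2
      omega
  constructor
  · rintro ⟨h1, h2⟩
    rw [hc (by omega)] at h2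
    exact ⟨by omega, by omega, h2⟩
  · rintro ⟨h1, h2, h3⟩
    rw [hc h2]
    exact ⟨by omega, h3⟩

def r (b n L β : ℕ) : ℚ := a b n L β / a b n L 0
def s (b n L β : ℕ) : ℚ := B b n L β / a b n L 0

lemma r_succ (b : ℕ) (hb : 2 ≤ b) (n L β : ℕ) :
    r b n (L + 1) β = r b n L β + (dg b n L : ℚ) / (dg b n L + 1) * s b n L β := by
  have h := (a_zero_pos b hb n L).ne'
  have h2 : (dg b n L : ℚ) + 1 ≠ 0 := by positivity
  unfold r s
  rw [a_succ b hb n L β, a_succ b hb n L 0, B_zero b hb]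
  field_simp
  ring

lemma s_succ (b : ℕ) (hb : 2 ≤ b) (n L β : ℕ) :
    s b n (L + 1) (β + 1) = ((b : ℚ) - dg b n L - 1) / (dg b n L + 1) * r b n L β
      + ((b : ℚ) - dg b n L) / (dg b n L + 1) * s b n L β := by
  have h := (a_zero_pos b hb n L).ne'
  have h2 : (dg b n L : ℚ) + 1 ≠ 0 := by positivity
  unfold r s
  rw [B_succ b hb n L β, a_succ b hb n L 0, B_zero b hb]
  field_simp
  ring

lemma s_eq (b : ℕ) (hb : 2 ≤ b) (n β : ℕ) : ∀ L, β ≤ L → s b n L β =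
    ∑ i ∈ Finset.range β,
      (∏ h ∈ Finset.range i, ((b : ℚ) - dg b n (L - (h + 1))) / (dg b n (L - (h + 1)) + 1)) *
      (((b : ℚ) - dg b n (L - (i + 1)) - 1) / (dg b n (L - (i + 1)) + 1)) *
      r b n (L - (i + 1)) (β - (i + 1)) := by
  induction β with
  | zero => intro L _; simp [s, B_zero b hb]
  | succ β ih =>
    intro L hL
    obtain ⟨L, rfl⟩ : ∃ K, L = K + 1 := ⟨L - 1, by omega⟩
    rw [s_succ b hb, ih L (by omega), Finset.sum_range_succ', add_comm, Finset.mul_sum]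
    congr 1
    · apply Finset.sum_congr rfl
      intro i _
      rw [Finset.prod_range_succ']
      simp only [Nat.add_sub_add_right, Nat.sub_zero, zero_add, Nat.add_sub_cancel]
      ring
    · simp

lemma cword_eq (b n M i : ℕ) :
    cword b ((List.range (i + 1 + 1)).map fun t => n / b ^ (M - t) % b) =
    (dg b n M : ℚ) / (dg b n M + 1) *
      (∏ h ∈ Finset.range i, ((b : ℚ) - dg b n (M - (h + 1))) / (dg b n (M - (h + 1)) + 1)) *
      (((b : ℚ) - dg b n (M - (i + 1)) - 1) / (dg b n (M - (i + 1)) + 1)) := by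
  have hg : ∀ h, h < i + 1 + 1 →
      ((List.range (i + 1 + 1)).map fun t => n / b ^ (M - t) % b).getD h 0 = dg b n (M - h) := by
    intro h hh
    simp [List.getD, hh, dg]
  unfold cword
  simp only [List.length_map, List.length_range, Nat.add_sub_cancel]
  rw [hg 0 (by omega), hg (i + 1) (by omega), Finset.prod_Ico_eq_prod_range]
  simp only [Nat.add_sub_cancel, Nat.sub_zero]
  congr 2
  apply Finset.prod_congr rfl
  intro h hh
  have := Finset.mem_range.mp hh
  rw [hg (1 + h) (by omega), add_comm 1 h]

end S9

/-- For `b ≥ 2`, `n ≥ 1` with base-`b` digits `n_l ⋯ n_0`, and `0 ≤ β ≤ l`, writing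
`n^{(k)} = n mod b^{l+1−k}`, one has, in the rational numbers:
`A_n(β)/A_n(0) − A_{n^{(l−β+1)}}(β)/A_{n^{(l−β+1)}}(0)
 = Σ_{j=0}^{l−β} Σ_{i=1}^{β} c(n_{l−j} ⋯ n_{l−j−i}) · A_{n^{(j+i+1)}}(β−i)/A_{n^{(j+i+1)}}(0)`.
(Note `n^{(l−β+1)} = n mod b^β` and `n^{(j+i+1)} = n mod b^{l−j−i}`.) -/
theorem stmt9 (b : ℕ) (hb : 2 ≤ b) (n l β : ℕ) (hn : 1 ≤ n)
    (hl : (Nat.digits b n).length = l + 1) (hβ : β ≤ l) :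
    (borrowA b n β : ℚ) / (borrowA b n 0 : ℚ) -
        (borrowA b (n % b ^ β) β : ℚ) / (borrowA b (n % b ^ β) 0 : ℚ) =
      ∑ j ∈ Finset.range (l - β + 1), ∑ i ∈ Finset.Icc 1 β,
        cword b ((List.range (i + 1)).map fun t => n / b ^ (l - j - t) % b) *
          ((borrowA b (n % b ^ (l - j - i)) (β - i) : ℚ) /
            (borrowA b (n % b ^ (l - j - i)) 0 : ℚ)) := by
  have hnL : n = n % b ^ (l + 1) := by
    rw [Nat.mod_eq_of_lt]
    exact (Nat.digits_length_le_iff (by omega) _).mp hl.le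
  have h0 : ∀ γ, (borrowA b n γ : ℚ) = S9.a b n (l + 1) γ := by
    intro γ
    rw [← S9.borrowA_eq b hb, ← hnL]
  rw [h0, h0]
  simp only [S9.borrowA_eq b hb]
  change S9.r b n (l + 1) β - S9.r b n β β = _
  have tele : ∀ k, S9.r b n (β + k) β - S9.r b n β β = ∑ j ∈ Finset.range k,
      (S9.dg b n (β + j) : ℚ) / (S9.dg b n (β + j) + 1) * S9.s b n (β + j) β := by
    intro k
    induction k with
    | zero => simp
    | succ k ih =>
      rw [Finset.sum_range_succ, ← ih, ← add_assoc, S9.r_succ b hb]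
      ring
  have h1 : l + 1 = β + (l - β + 1) := by omega
  rw [h1, tele, ← Finset.sum_range_reflect]
  apply Finset.sum_congr rfl
  intro j hj
  have hj := Finset.mem_range.mp hj
  have h2 : β + (l - β + 1 - 1 - j) = l - j := by omega
  rw [h2, S9.s_eq b hb n β (l - j) (by omega), Finset.mul_sum]
  have h3 : Finset.Icc 1 β = Finset.Ico 1 (β + 1) := by ext; simp
  rw [h3, Finset.sum_Ico_eq_sum_range, Nat.add_sub_cancel]
  apply Finset.sum_congr rfl
  intro i _
  rw [add_comm 1 i, S9.cword_eq]
  unfold S9.r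
  ring
end

section
/- Let p be a prime and let n ≥ 0. Then, as an identity in the rational numbers, a_{p^2}(n) = (∏_{w_0=0}^{p−1} (w_0+1)^{|n|_{w_0}}) · (1 + Σ_{w_1=0}^{p−1} Σ_{w_0=0}^{p−1} (w_1/(w_1+1)) · ((p − w_0 − 1)/(w_0+1)) · |n|_{w_1 w_0}), where |n|_{w_1 w_0} counts occurrences of the two-letter word w_1 w_0 in the base-p digit string of n. -/
lemma vfac (p : ℕ) (hp : p.Prime) (q r : ℕ) (hr : r < p) :
    padicValNat p (p * q + r).factorial = padicValNat p q.factorial + q := by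
  have := Fact.mk hp
  rw [padicValNat_factorial_mul_add q hr, padicValNat_factorial_mul]

lemma vchoose (p : ℕ) (hp : p.Prime) (n m : ℕ) (h : m ≤ n) :
    padicValNat p (n.choose m) + padicValNat p m.factorial + padicValNat p (n - m).factorial
      = padicValNat p n.factorial := by
  have := Fact.mk hp
  rw [← Nat.choose_mul_factorial_mul_factorial h,
    padicValNat.mul (by have := Nat.choose_pos h; positivity) (by positivity),
    padicValNat.mul (by have := Nat.choose_pos h; positivity) (by positivity)]

lemma dvd1 (p : ℕ) (hp : p.Prime) (k q r t s : ℕ) (hr : r < p) (hs : s ≤ r) :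
    p ^ k ∣ (p * q + r).choose (p * t + s) ↔ p ^ k ∣ q.choose t := by
  have := Fact.mk hp
  rcases le_or_gt t q with h | h
  · obtain ⟨u, rfl⟩ := Nat.exists_eq_add_of_le h
    obtain ⟨v, rfl⟩ := Nat.exists_eq_add_of_le hs
    have e : p * (t + u) + (s + v) = (p * t + s) + (p * u + v) := by ring
    have h1 := vchoose p hp (p * (t + u) + (s + v)) (p * t + s) (by omega)
    have h2 := vchoose p hp (t + u) t (by omega)
    rw [show p * (t + u) + (s + v) - (p * t + s) = p * u + v by omega,
      vfac p hp _ _ hr, vfac p hp _ _ (by omega), vfac p hp _ _ (by omega)] at h1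
    rw [show t + u - t = u by omega] at h2
    rw [padicValNat_dvd_iff_le (Nat.choose_pos (by omega)).ne',
      padicValNat_dvd_iff_le (Nat.choose_pos (by omega)).ne']
    omega
  · have : p * q + p ≤ p * t := by nlinarith
    rw [Nat.choose_eq_zero_of_lt h, Nat.choose_eq_zero_of_lt (by omega)]

lemma dvd2 (p : ℕ) (hp : p.Prime) (k q r t s : ℕ) (hr : r < s) (hs : s < p) :
    p ^ (k + 1) ∣ (p * q + r).choose (p * t + s) ↔ p ^ k ∣ q * (q - 1).choose t := by
  have := Fact.mk hp
  rcases lt_or_ge t q with h | h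
  · obtain ⟨u, rfl⟩ := Nat.exists_eq_add_of_lt h
    have e : p * (t + u + 1) + r = (p * t + s) + (p * u + (p + r - s)) := by
      have : p * (t + u + 1) = p * t + p * u + p := by ring
      omega
    have h1 := vchoose p hp (p * (t + u + 1) + r) (p * t + s) (by omega)
    have h2 := vchoose p hp (t + u) t (by omega)
    rw [show p * (t + u + 1) + r - (p * t + s) = p * u + (p + r - s) by omega,
      vfac p hp _ _ (by omega), vfac p hp _ _ (by omega), vfac p hp _ _ (by omega),
      Nat.factorial_succ, padicValNat.mul (by positivity) (by positivity)] at h1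
    rw [show t + u - t = u by omega] at h2
    have hc := (Nat.choose_pos (show t ≤ t + u by omega)).ne'
    rw [show t + u + 1 - 1 = t + u by omega,
      padicValNat_dvd_iff_le (Nat.choose_pos (by omega)).ne',
      padicValNat_dvd_iff_le (mul_ne_zero (by omega) hc),
      padicValNat.mul (by omega) hc]
    omega
  · have : p * q ≤ p * t := by nlinarith
    rw [Nat.choose_eq_zero_of_lt (by omega)]
    rcases Nat.eq_zero_or_pos q with h0 | h0
    · simp [h0]
    · rw [Nat.choose_eq_zero_of_lt (n := q - 1) (by omega)]; simp

lemma rc_eq (k n N : ℕ) (h : n < N) :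
    rowCount k n = ∑ m ∈ Finset.range N, if k ∣ n.choose m then 0 else 1 := by
  unfold rowCount
  rw [Finset.card_filter]
  simp only [ite_not]
  refine Finset.sum_subset ?_ ?_
  · intro x; simp; omega
  · intro x _ hx
    rw [Nat.choose_eq_zero_of_lt (by simpa using hx)]; simp

lemma sum_block (p M : ℕ) (f : ℕ → ℕ) :
    ∑ m ∈ Finset.range (p * M), f m
      = ∑ t ∈ Finset.range M, ∑ s ∈ Finset.range p, f (p * t + s) := by
  induction M with
  | zero => simp
  | succ M ih => rw [Nat.mul_succ, Finset.sum_range_add, Finset.sum_range_succ, ih]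

lemma rc_rec (p : ℕ) (hp : p.Prime) (k q r : ℕ) (hr : r < p) :
    rowCount (p ^ (k + 1)) (p * q + r) = (r + 1) * rowCount (p ^ (k + 1)) q
      + (p - 1 - r) * ∑ t ∈ Finset.range (q + 1),
          if p ^ k ∣ q * (q - 1).choose t then 0 else 1 := by
  rw [rc_eq _ _ (p * (q + 1)) (by rw [Nat.mul_succ]; omega), sum_block,
    rc_eq _ q (q + 1) (by omega), Finset.mul_sum, Finset.mul_sum, ← Finset.sum_add_distrib]
  refine Finset.sum_congr rfl fun t _ => ?_
  obtain ⟨v, rfl⟩ := Nat.exists_eq_add_of_lt hr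
  rw [show r + v + 1 = (r + 1) + v by ring, Finset.sum_range_add]
  congr 1
  · rw [Finset.sum_congr rfl (g := fun _ => if (r + 1 + v) ^ (k + 1) ∣ q.choose t then 0 else 1)]
    · rw [Finset.sum_const, Finset.card_range, smul_eq_mul]
    · intro s hs
      rw [Finset.mem_range] at hs
      exact if_congr (dvd1 (r + 1 + v) (by convert hp using 1; ring) (k + 1) q r t s (by omega) (by omega)) rfl rfl
  · rw [Finset.sum_congr rfl
      (g := fun _ => if (r + 1 + v) ^ k ∣ q * (q - 1).choose t then 0 else 1)]
    · rw [Finset.sum_const, Finset.card_range, smul_eq_mul]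
      congr 1; omega
    · intro s hs
      rw [Finset.mem_range] at hs
      exact if_congr (dvd2 (r + 1 + v) (by convert hp using 1; ring) k q r t (r + 1 + s) (by omega) (by omega)) rfl rfl

lemma rc1_rec (p : ℕ) (hp : p.Prime) (q r : ℕ) (hr : r < p) :
    rowCount p (p * q + r) = (r + 1) * rowCount p q := by
  have := rc_rec p hp 0 q r hr
  simpa using this

lemma rc2_rec (p : ℕ) (hp : p.Prime) (q r : ℕ) (hr : r < p) :
    (rowCount (p ^ 2) (p * q + r) : ℚ) = (r + 1) * rowCount (p ^ 2) q
      + (p - r - 1) * (((q % p : ℕ) : ℚ) / (((q % p : ℕ) : ℚ) + 1)) * rowCount p q := by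
  have h := rc_rec p hp 1 q r hr
  rw [show (1 + 1) = 2 from rfl, pow_one] at h
  have hq := Nat.div_add_mod q p
  have hd := Nat.mod_lt q hp.pos
  have key : ((∑ t ∈ Finset.range (q + 1),
      if p ∣ q * (q - 1).choose t then 0 else 1 : ℕ) : ℚ)
      = (((q % p : ℕ) : ℚ) / (((q % p : ℕ) : ℚ) + 1)) * rowCount p q := by
    rcases Nat.eq_zero_or_pos (q % p) with h0 | h0
    · have : p ∣ q := Nat.dvd_of_mod_eq_zero h0
      simp [h0, this.mul_right]
    · have hnd : ¬ p ∣ q := fun hh => by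
        have := Nat.mod_eq_zero_of_dvd hh; omega
      simp only [hp.dvd_mul, hnd, false_or]
      rw [← rc_eq p (q - 1) (q + 1) (by omega)]
      have e1 := rc1_rec p hp (q / p) (q % p) hd
      have e2 := rc1_rec p hp (q / p) (q % p - 1) (by omega)
      rw [show p * (q / p) + (q % p - 1) = q - 1 by omega,
        show q % p - 1 + 1 = q % p by omega] at e2
      rw [hq] at e1
      rw [e1, e2]
      push_cast
      have : ((q % p : ℕ) : ℚ) + 1 ≠ 0 := by positivity
      field_simp
  rw [h]
  push_cast [Nat.sub_sub, Nat.cast_sub (show 1 + r ≤ p by omega)] at key ⊢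
  rw [key]
  ring

lemma word_succ (p n : ℕ) (hp : 1 < p) (hn : 0 < n) :
    wordOf p n = wordOf p (n / p) ++ [n % p] := by
  unfold wordOf
  rw [Nat.digits_def' hp hn, List.reverse_cons]

lemma sc1 (p n w : ℕ) (hp : 1 < p) (hn : 0 < n) :
    subwordCount p n [w] = subwordCount p (n / p) [w] + if n % p = w then 1 else 0 := by
  unfold subwordCount
  rw [word_succ p n hp hn]
  generalize wordOf p (n / p) = W
  simp only [List.length_append, List.length_singleton, Nat.add_sub_cancel, Finset.card_filter]
  rw [Finset.sum_range_succ]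
  congr 1
  · refine Finset.sum_congr rfl fun s hs => ?_
    rw [Finset.mem_range] at hs
    rw [List.drop_append_of_le_length hs.le, List.take_append_of_le_length (by simp; omega)]
  · simp

lemma sc2 (p n w v : ℕ) (hp : 1 < p) (hn : 0 < n / p) :
    subwordCount p n [w, v] = subwordCount p (n / p) [w, v] +
      if n / p % p = w ∧ n % p = v then 1 else 0 := by
  have hn' : 0 < n := by
    rcases Nat.eq_zero_or_pos n with h | h
    · simp [h] at hn
    · exact h
  unfold subwordCount
  rw [word_succ p n hp hn', word_succ p (n / p) hp hn]
  generalize wordOf p (n / p / p) = W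
  simp only [List.length_append, List.length_singleton, Finset.card_filter,
    List.length_cons, List.length_nil]
  rw [show W.length + 1 + 1 + 1 - (0 + 1 + 1) = W.length + 1 by omega,
    show W.length + 1 + 1 - (0 + 1 + 1) = W.length by omega, Finset.sum_range_succ]
  congr 1
  · refine Finset.sum_congr rfl fun s hs => ?_
    rw [Finset.mem_range] at hs
    rw [List.drop_append_of_le_length (by simp; omega),
      List.take_append_of_le_length (by simp; omega)]
  · simp

lemma sc2' (p n w v : ℕ) (hp : 1 < p) (hn : 0 < n) (h0 : n / p = 0) :
    subwordCount p n [w, v] = 0 := by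
  unfold subwordCount
  rw [word_succ p n hp hn, h0]
  simp [wordOf]

lemma rc_zero (k : ℕ) (hk : 1 < k) : rowCount k 0 = 1 := by
  rw [rc_eq k 0 1 (by omega)]
  simp; omega

lemma sc_zero_s12 (p w : ℕ) (l : List ℕ) : subwordCount p 0 (w :: l) = 0 := by
  simp [subwordCount, wordOf]

lemma prod_rec (p n : ℕ) (hp : 1 < p) (hn : 0 < n) :
    (∏ w0 ∈ Finset.range p, ((w0 : ℚ) + 1) ^ subwordCount p n [w0])
      = ((n % p : ℕ) + 1) * ∏ w0 ∈ Finset.range p, ((w0 : ℚ) + 1) ^ subwordCount p (n / p) [w0] := by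
  have hm : n % p ∈ Finset.range p := Finset.mem_range.2 (Nat.mod_lt _ (by omega))
  simp only [sc1 p n _ hp hn, pow_add, Finset.prod_mul_distrib, pow_ite, pow_one, pow_zero,
    Finset.prod_ite_eq, hm, if_true]
  ring

lemma sum_rec (p n : ℕ) (hp : 1 < p) (hn : 0 < n) (c : ℕ → ℕ → ℚ) (hc : ∀ v, c 0 v = 0) :
    (∑ w1 ∈ Finset.range p, ∑ w0 ∈ Finset.range p, c w1 w0 * (subwordCount p n [w1, w0] : ℚ))
      = (∑ w1 ∈ Finset.range p, ∑ w0 ∈ Finset.range p,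
          c w1 w0 * (subwordCount p (n / p) [w1, w0] : ℚ)) + c (n / p % p) (n % p) := by
  rcases Nat.eq_zero_or_pos (n / p) with h0 | h0
  · simp [sc2' p n _ _ hp hn h0, h0, sc_zero_s12, hc]
  · have hm : n % p ∈ Finset.range p := Finset.mem_range.2 (Nat.mod_lt _ (by omega))
    have hm' : n / p % p ∈ Finset.range p := Finset.mem_range.2 (Nat.mod_lt _ (by omega))
    simp only [sc2 p n _ _ hp h0, Nat.cast_add, mul_add, Finset.sum_add_distrib]
    congr 1
    rw [Finset.sum_eq_single_of_mem _ hm', Finset.sum_eq_single_of_mem _ hm]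
    · simp
    · intro b _ hb; simp [hb.symm]
    · intro b _ hb; simp [hb.symm]

lemma rc1_prod (p : ℕ) (hp : p.Prime) (n : ℕ) :
    (rowCount p n : ℚ) = ∏ w0 ∈ Finset.range p, ((w0 : ℚ) + 1) ^ subwordCount p n [w0] := by
  induction n using Nat.strong_induction_on with
  | _ n ih =>
    rcases Nat.eq_zero_or_pos n with rfl | hn
    · simp [rc_zero p hp.one_lt, sc_zero_s12]
    · rw [prod_rec p n hp.one_lt hn, ← ih (n / p) (Nat.div_lt_self hn hp.one_lt)]
      have := rc1_rec p hp (n / p) (n % p) (Nat.mod_lt _ hp.pos)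
      rw [Nat.div_add_mod] at this
      rw [this]; push_cast; rfl

/-- For a prime `p` and `n ≥ 0`, as an identity in the rational numbers:
`a_{p^2}(n) = (∏_{w₀=0}^{p−1} (w₀+1)^{|n|_{w₀}})
  · (1 + Σ_{w₁=0}^{p−1} Σ_{w₀=0}^{p−1} (w₁/(w₁+1)) · ((p−w₀−1)/(w₀+1)) · |n|_{w₁w₀})`. -/
theorem stmt12 (p : ℕ) (hp : p.Prime) (n : ℕ) :
    (rowCount (p ^ 2) n : ℚ) =
      (∏ w0 ∈ Finset.range p, ((w0 : ℚ) + 1) ^ subwordCount p n [w0]) *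
        (1 + ∑ w1 ∈ Finset.range p, ∑ w0 ∈ Finset.range p,
          ((w1 : ℚ) / ((w1 : ℚ) + 1)) * (((p : ℚ) - (w0 : ℚ) - 1) / ((w0 : ℚ) + 1)) *
            (subwordCount p n [w1, w0] : ℚ)) := by
  induction n using Nat.strong_induction_on with
  | _ n ih =>
    rcases Nat.eq_zero_or_pos n with rfl | hn
    · simp [rc_zero (p ^ 2) (Nat.one_lt_pow (by norm_num) hp.one_lt), sc_zero_s12]
    · have h := rc2_rec p hp (n / p) (n % p) (Nat.mod_lt _ hp.pos)
      rw [Nat.div_add_mod, ih (n / p) (Nat.div_lt_self hn hp.one_lt), rc1_prod p hp] at h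
      rw [h, prod_rec p n hp.one_lt hn,
        sum_rec p n hp.one_lt hn (fun w1 w0 => ((w1 : ℚ) / ((w1 : ℚ) + 1)) *
          (((p : ℚ) - (w0 : ℚ) - 1) / ((w0 : ℚ) + 1))) (by simp)]
      have : ((n % p : ℕ) : ℚ) + 1 ≠ 0 := by positivity
      have : ((n / p % p : ℕ) : ℚ) + 1 ≠ 0 := by positivity
      field_simp
      ring
end

section
/- For every n ≥ 0, the number of nonzero entries on row n of Pascal's triangle modulo 4 satisfies, as an identity in the rational numbers, a_4(n) = 2^{|n|_1} · (1 + (1/2)|n|_{10}), where subword counts are taken in the base-2 representation of n. -/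
def cntw (W w : List ℕ) : ℕ :=
  ((Finset.range (W.length + 1 - w.length)).filter fun s => (W.drop s).take w.length = w).card

theorem cnt1 (W : List ℕ) (b : ℕ) : cntw (W ++ [b]) [1] = cntw W [1] + if b = 1 then 1 else 0 := by
  unfold cntw
  simp only [List.length_append, List.length_singleton, Nat.add_sub_cancel]
  rw [Finset.card_filter, Finset.card_filter, Finset.sum_range_succ]
  congr 1
  · apply Finset.sum_congr rfl
    intro s hs
    have hs := Finset.mem_range.1 hs
    rw [List.drop_append_of_le_length hs.le, List.take_append_of_le_length (by simp; omega)]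
  · simp

theorem cnt2 (W : List ℕ) (a b : ℕ) : cntw (W ++ [a] ++ [b]) [1, 0] =
    cntw (W ++ [a]) [1, 0] + if a = 1 ∧ b = 0 then 1 else 0 := by
  unfold cntw
  have e1 : (W ++ [a] ++ [b]).length + 1 - [1, 0].length = W.length + 1 := by simp
  have e2 : (W ++ [a]).length + 1 - [1, 0].length = W.length := by simp
  rw [e1, e2, Finset.card_filter, Finset.card_filter, Finset.sum_range_succ]
  congr 1
  · apply Finset.sum_congr rfl
    intro s hs
    have hs := Finset.mem_range.1 hs
    rw [List.drop_append_of_le_length (by simp; omega),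
      List.take_append_of_le_length (by simp; omega)]
  · simp

theorem cnt2' (W : List ℕ) : cntw (W ++ [1]) [1, 0] = cntw W [1, 0] := by
  rcases List.eq_nil_or_concat W with rfl | ⟨L, a, rfl⟩
  · decide
  · rw [List.concat_eq_append, cnt2]; simp

theorem word_odd (n : ℕ) : wordOf 2 (2 * n + 1) = wordOf 2 n ++ [1] := by
  unfold wordOf
  rw [Nat.digits_def' (by norm_num) (by omega), show (2 * n + 1) % 2 = 1 by omega,
    show (2 * n + 1) / 2 = n by omega, List.reverse_cons]

theorem word_even (n : ℕ) (h : 0 < n) : wordOf 2 (2 * n) = wordOf 2 n ++ [0] := by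
  unfold wordOf
  rw [Nat.digits_def' (by norm_num) (by omega), show (2 * n) % 2 = 0 by omega,
    show (2 * n) / 2 = n by omega, List.reverse_cons]

theorem sub_eq (n : ℕ) (w : List ℕ) : subwordCount 2 n w = cntw (wordOf 2 n) w := rfl

/-- rows -/
theorem choose_pascal2 (n m : ℕ) : (n + 2).choose (m + 2) =
    n.choose m + 2 * n.choose (m + 1) + n.choose (m + 2) := by
  rw [Nat.choose_succ_succ, Nat.choose_succ_succ, Nat.choose_succ_succ]; ring

theorem odd_even (n m : ℕ) : 2 ∣ (2 * n).choose (2 * m + 1) := by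
  rcases n with _ | n
  · simp
  have h := Nat.add_one_mul_choose_eq (2 * n + 1) (2 * m)
  have : 2 ∣ (2 * (n + 1)).choose (2 * m + 1) * (2 * m + 1) := by
    rw [show 2 * (n + 1) = 2 * n + 1 + 1 by ring, ← h]
    exact Dvd.dvd.mul_right ⟨n + 1, by ring⟩ _
  exact Nat.Coprime.dvd_of_dvd_mul_right (by simp) this

theorem ee (n : ℕ) : ∀ m, (2 * n).choose (2 * m) % 4 = n.choose m % 4 := by
  induction n with
  | zero => intro m; rcases m with _ | m <;> simp [Nat.mul_add]
  | succ n ih =>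
    intro m
    rcases m with _ | m
    · simp
    have h1 := ih m
    have h2 := ih (m + 1)
    have h3 := odd_even n m
    rw [show 2 * (n + 1) = 2 * n + 2 by ring, show 2 * (m + 1) = 2 * m + 2 by ring,
      choose_pascal2, Nat.choose_succ_succ]
    rw [show 2 * (m + 1) = 2 * m + 2 by ring] at h2
    simp only [Nat.succ_eq_add_one]
    omega

theorem ee_dvd (k n m : ℕ) (hk : k ∣ 4) : k ∣ (2 * n).choose (2 * m) ↔ k ∣ n.choose m :=
  Nat.ModEq.dvd_iff (show _ ≡ _ [MOD 4] from ee n m) hk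

theorem cop (k a : ℕ) (hk : k ∣ 4) : Nat.Coprime k (2 * a + 1) :=
  Nat.Coprime.coprime_dvd_left hk
    (by rw [show 4 = 2 ^ 2 by norm_num]; exact Nat.Coprime.pow_left 2 (by simp))

theorem oo_dvd (k n m : ℕ) (hk : k ∣ 4) :
    k ∣ (2 * n + 1).choose (2 * m + 1) ↔ k ∣ n.choose m := by
  have h := Nat.add_one_mul_choose_eq (2 * n) (2 * m)
  rw [← ee_dvd k n m hk, ← (cop k m hk).dvd_mul_right, ← h, (cop k n hk).dvd_mul_left]

theorem oe_dvd (k n m : ℕ) (hk : k ∣ 4) :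
    k ∣ (2 * n + 1).choose (2 * m) ↔ k ∣ n.choose m := by
  rcases le_or_gt m n with h | h
  · rw [← Nat.choose_symm (by omega), show 2 * n + 1 - 2 * m = 2 * (n - m) + 1 by omega,
      oo_dvd _ _ _ hk, Nat.choose_symm h]
  · rw [Nat.choose_eq_zero_of_lt h, Nat.choose_eq_zero_of_lt (by omega)]

theorem eo_dvd (n m : ℕ) :
    4 ∣ (2 * (n + 1)).choose (2 * m + 1) ↔ 2 ∣ (n + 1) * n.choose m := by
  have h := Nat.add_one_mul_choose_eq (2 * n + 1) (2 * m)
  rw [show 2 * (n + 1) = 2 * n + 1 + 1 by ring, ← (cop 4 m dvd_rfl).dvd_mul_right, ← h,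
    show 2 * n + 1 + 1 = 2 * (n + 1) by ring, mul_assoc, show 4 = 2 * 2 by norm_num,
    Nat.mul_dvd_mul_iff_left (by norm_num), Nat.prime_two.dvd_mul, Nat.prime_two.dvd_mul,
    oe_dvd 2 n m (by norm_num)]

theorem sum_two (f : ℕ → ℕ) (n : ℕ) : ∑ i ∈ Finset.range (2 * n), f i =
    ∑ i ∈ Finset.range n, f (2 * i) + ∑ i ∈ Finset.range n, f (2 * i + 1) := by
  induction n with
  | zero => simp
  | succ n ih =>
    rw [show 2 * (n + 1) = 2 * n + 1 + 1 by ring, Finset.sum_range_succ, Finset.sum_range_succ, ih,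
      Finset.sum_range_succ, Finset.sum_range_succ]
    ring

theorem row_eq (k n : ℕ) : rowCount k n =
    ∑ m ∈ Finset.range (n + 1), if ¬ k ∣ n.choose m then 1 else 0 := by
  unfold rowCount; rw [Finset.card_filter]

theorem row_eq' (k n : ℕ) : rowCount k n =
    ∑ m ∈ Finset.range (n + 2), if ¬ k ∣ n.choose m then 1 else 0 := by
  rw [row_eq, Finset.sum_range_succ _ (n + 1)]; simp

theorem row_odd (k n : ℕ) (hk : k ∣ 4) : rowCount k (2 * n + 1) = 2 * rowCount k n := by
  rw [row_eq, row_eq, show 2 * n + 1 + 1 = 2 * (n + 1) by ring, sum_two]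
  simp only [oo_dvd _ _ _ hk, oe_dvd _ _ _ hk]
  ring

theorem row_even (k n : ℕ) (hk : k ∣ 4) : rowCount k (2 * n) = rowCount k n +
    ∑ m ∈ Finset.range (n + 1), if ¬ k ∣ (2 * n).choose (2 * m + 1) then 1 else 0 := by
  rw [row_eq', row_eq, show 2 * n + 2 = 2 * (n + 1) by ring, sum_two]
  simp only [ee_dvd _ _ _ hk]

theorem row2_even (n : ℕ) : rowCount 2 (2 * n) = rowCount 2 n := by
  rw [row_even _ _ (by norm_num)]; simp [odd_even]

theorem row4_4 (n : ℕ) : rowCount 4 (2 * (2 * n)) = rowCount 4 (2 * n) := by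
  rcases n with _ | n
  · simp
  rw [row_even _ _ dvd_rfl, Finset.sum_eq_zero, add_zero]
  intro m _
  rw [if_neg]
  rw [not_not, show 2 * (n + 1) = 2 * n + 1 + 1 by ring, eo_dvd]
  exact Dvd.dvd.mul_right ⟨n + 1, by ring⟩ _

theorem row4_2 (n : ℕ) : rowCount 4 (2 * (2 * n + 1)) = rowCount 4 (2 * n + 1) + rowCount 2 n := by
  rw [row_even _ _ dvd_rfl, ← row2_even, row_eq' 2]
  simp only [eo_dvd, (cop 2 n (by norm_num)).dvd_mul_left]

theorem row2 (n : ℕ) : rowCount 2 n = 2 ^ subwordCount 2 n [1] := by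
  induction n using Nat.strong_induction_on with
  | _ n ih =>
    rcases Nat.even_or_odd' n with ⟨k, rfl | rfl⟩
    · rcases Nat.eq_zero_or_pos k with rfl | hk
      · decide
      · rw [row2_even, ih k (by omega), sub_eq, sub_eq, word_even k hk, cnt1]; simp
    · rw [row_odd _ _ (by norm_num), ih k (by omega), sub_eq, sub_eq, word_odd, cnt1]
      simp [pow_succ, mul_comm]

/-- For every `n ≥ 0`, as an identity in the rational numbers:
`a_4(n) = 2^{|n|_1} · (1 + (1/2)|n|_{10})`, subword counts taken in base 2. -/
theorem stmt13 (n : ℕ) :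
    (rowCount 4 n : ℚ) =
      2 ^ subwordCount 2 n [1] * (1 + (1 / 2) * (subwordCount 2 n [1, 0] : ℚ)) := by
  induction n using Nat.strong_induction_on with
  | _ n ih =>
    rcases Nat.even_or_odd' n with ⟨k, rfl | rfl⟩
    · rcases Nat.even_or_odd' k with ⟨j, rfl | rfl⟩
      · rcases Nat.eq_zero_or_pos j with rfl | hj
        · have h1 : rowCount 4 0 = 1 := by decide
          have h2 : subwordCount 2 0 [1] = 0 := by decide
          have h3 : subwordCount 2 0 [1, 0] = 0 := by decide
          simp [h1, h2, h3]
        · rw [row4_4, ih (2 * j) (by omega)]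
          simp only [sub_eq]
          rw [word_even (2 * j) (by omega), word_even j hj, cnt2, cnt1 (_ ++ _)]
          simp
      · rw [row4_2, Nat.cast_add, ih (2 * j + 1) (by omega), row2]
        simp only [sub_eq]
        rw [word_even (2 * j + 1) (by omega), word_odd, cnt2, cnt1 (_ ++ _), cnt1]
        simp only [if_true, and_self, zero_ne_one, if_false, add_zero]
        push_cast
        ring
    · rw [row_odd _ _ dvd_rfl, Nat.cast_mul, ih k (by omega)]
      simp only [sub_eq]
      rw [word_odd, cnt2', cnt1]
      simp only [if_true]
      push_cast
      ring
end
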